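/- arXiv:2008.05430 — 3 statements merged into one kernel-verified Lean document; each statement's English description precedes it below -/
import Mathlib

section
/- Suppose X ≠ ∅. Then λ₀(1−α)^m ≥ γ^l (1−α−γ)^k ≥ S₁ ≥ S − λ₁(1+α)(1−D)^{m−1}. -/
open scoped BigOperators

/-- The arc relation of the oriented star `S_{k,l}` on `Fin (k+l+1)`:
vertex `0` is the center, vertices `1,…,k` are the out-leaves and
vertices `k+1,…,k+l` are the in-leaves. -/
def StarArc (k l : ℕ) (a b : Fin (k + l + 1)) : Prop :=
  (a.val = 0 ∧ 1 ≤ b.val ∧ b.val ≤ k) ∨ (b.val = 0 ∧ k + 1 ≤ a.val)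

/-- `φ` witnesses an induced copy of `S_{k,l}` in the digraph with arc relation `A`:
it is injective and maps arcs to arcs and non-arcs to non-arcs. -/
def IsStarEmb (k l : ℕ) {V : Type*} (A : V → V → Prop) (φ : Fin (k + l + 1) → V) : Prop :=
  Function.Injective φ ∧ ∀ a b, StarArc k l a b ↔ A (φ a) (φ b)

/-- `s(G)`: the probability that a uniformly random map `V(S_{k,l}) → V(G)`
induces a copy of `S_{k,l}`. -/
noncomputable def starProb (k l : ℕ) (V : Type*) [Fintype V] (A : V → V → Prop) : ℝ :=
  (Nat.card {φ : Fin (k + l + 1) → V // IsStarEmb k l A φ} : ℝ) /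
    (Fintype.card V : ℝ) ^ (k + l + 1)

/-- The probability that a uniformly random map induces a copy of `S_{k,l}`
and moreover has property `P`. -/
noncomputable def starProbOn (k l : ℕ) {V : Type*} [Fintype V] (A : V → V → Prop)
    (P : (Fin (k + l + 1) → V) → Prop) : ℝ :=
  (Nat.card {φ : Fin (k + l + 1) → V // IsStarEmb k l A φ ∧ P φ} : ℝ) /
    (Fintype.card V : ℝ) ^ (k + l + 1)

/-- `s(z→v) = Pr[φ ∈ 𝒮 | φ z = v]`. -/
noncomputable def sCond (k l : ℕ) {V : Type*} [Fintype V] (A : V → V → Prop)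
    (z : Fin (k + l + 1)) (v : V) : ℝ :=
  (Nat.card {φ : Fin (k + l + 1) → V // IsStarEmb k l A φ ∧ φ z = v} : ℝ) /
    (Fintype.card V : ℝ) ^ (k + l)

/-- `Pr[φ ∈ 𝒮 ∧ P φ | φ(c) = v]`, where `c = 0` is the center of the star. -/
noncomputable def sCondOn (k l : ℕ) {V : Type*} [Fintype V] (A : V → V → Prop) (v : V)
    (P : (Fin (k + l + 1) → V) → Prop) : ℝ :=
  (Nat.card {φ : Fin (k + l + 1) → V // IsStarEmb k l A φ ∧ φ 0 = v ∧ P φ} : ℝ) /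
    (Fintype.card V : ℝ) ^ (k + l)

open scoped Fin.NatCast in
/-- `s(v) = (s(c→v) + l·s(i→v) + k·s(o→v))/(m+1)`, where the center is `0`,
`k+1` is an in-leaf and `1` is an out-leaf. -/
noncomputable def sVert (k l : ℕ) {V : Type*} [Fintype V] (A : V → V → Prop) (v : V) : ℝ :=
  (sCond k l A 0 v + l * sCond k l A ((k + 1 : ℕ) : Fin (k + l + 1)) v
      + k * sCond k l A 1 v) / ((k : ℝ) + l + 1)

/-- `ρ(v)`: the proportion of vertices adjacent to `v`. -/
noncomputable def rho {V : Type*} [Fintype V] (A : V → V → Prop) (v : V) : ℝ :=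
  (Nat.card {u : V // A v u ∨ A u v} : ℝ) / (Fintype.card V : ℝ)

/-- `ρ⁺_B(v)`: the proportion of vertices that are out-neighbours of `v` lying in `B`. -/
noncomputable def rhoPIn {V : Type*} [Fintype V] (A : V → V → Prop) (B : Set V) (v : V) : ℝ :=
  (Nat.card {u : V // A v u ∧ u ∈ B} : ℝ) / (Fintype.card V : ℝ)

/-- `ρ⁻_B(v)`: the proportion of vertices that are in-neighbours of `v` lying in `B`. -/
noncomputable def rhoMIn {V : Type*} [Fintype V] (A : V → V → Prop) (B : Set V) (v : V) : ℝ :=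
  (Nat.card {u : V // A u v ∧ u ∈ B} : ℝ) / (Fintype.card V : ℝ)

/-- `ρ_B(v)`: the proportion of vertices adjacent to `v` lying in `B`. -/
noncomputable def rhoIn {V : Type*} [Fintype V] (A : V → V → Prop) (B : Set V) (v : V) : ℝ :=
  (Nat.card {u : V // (A v u ∨ A u v) ∧ u ∈ B} : ℝ) / (Fintype.card V : ℝ)

/-- `μ(B) = |B|/n`. -/
noncomputable def muSet {V : Type*} [Fintype V] (B : Set V) : ℝ :=
  (Nat.card B : ℝ) / (Fintype.card V : ℝ)

/-- `X`: the set of vertices of large degree, `ρ(v) ≥ 1/2`. -/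
def bigX {V : Type*} [Fintype V] (A : V → V → Prop) : Set V := {v | 1 / 2 ≤ rho A v}

/-- `Y = V(G) \ X`. -/
def bigY {V : Type*} [Fintype V] (A : V → V → Prop) : Set V := (bigX A)ᶜ

/-- `α = μ(X)`. -/
noncomputable def alphaX {V : Type*} [Fintype V] (A : V → V → Prop) : ℝ := muSet (bigX A)

/-- `D = min_{x ∈ X} ρ(x)`. -/
noncomputable def Dmin {V : Type*} [Fintype V] (A : V → V → Prop) : ℝ :=
  sInf (rho A '' bigX A)

/-- `β = max_{y ∈ Y} ρ_Y(y)`. -/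
noncomputable def betaY {V : Type*} [Fintype V] (A : V → V → Prop) : ℝ :=
  sSup ((fun y => rhoIn A (bigY A) y) '' bigY A)

/-- `γ = min_{x ∈ X} ρ⁻_Y(x)`. -/
noncomputable def gammaX {V : Type*} [Fintype V] (A : V → V → Prop) : ℝ :=
  sInf ((fun x => rhoMIn A (bigY A) x) '' bigX A)

/-- `S = (m+1)·min_{v ∈ V(G)} s(v)`. -/
noncomputable def Smin (k l : ℕ) {V : Type*} [Fintype V] (A : V → V → Prop) : ℝ :=
  ((k : ℝ) + l + 1) * sInf (Set.range (sVert k l A))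

/-- `S₁ = min_{x ∈ X} (ρ⁺_Y(x))^k (ρ⁻_Y(x))^l`. -/
noncomputable def S1min (k l : ℕ) {V : Type*} [Fintype V] (A : V → V → Prop) : ℝ :=
  sInf ((fun x => rhoPIn A (bigY A) x ^ k * rhoMIn A (bigY A) x ^ l) '' bigX A)

/-- `S₂ = S₁ − ((m−1)/((m+1)·C(m,k)))·(α+β)(1−α)(1−D)^{m−2}`. -/
noncomputable def S2min (k l : ℕ) {V : Type*} [Fintype V] (A : V → V → Prop) : ℝ :=
  S1min k l A - (((k : ℝ) + l - 1) / (((k : ℝ) + l + 1) * (Nat.choose (k + l) k : ℝ)))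
    * (alphaX A + betaY A) * (1 - alphaX A) * (1 - Dmin A) ^ (k + l - 2)

/-- `λ₀ = k^k l^l / m^m`. -/
noncomputable def lam0 (k l : ℕ) : ℝ := (k : ℝ) ^ k * (l : ℝ) ^ l / ((k : ℝ) + l) ^ (k + l)

/-- `λ₁ = k^k l (l−1)^{l−1} / (m−1)^{m−1}` (with the convention `0⁰ = 1`). -/
noncomputable def lam1 (k l : ℕ) : ℝ :=
  (k : ℝ) ^ k * (l : ℝ) * ((l : ℝ) - 1) ^ (l - 1) / ((k : ℝ) + l - 1) ^ (k + l - 1)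

/-- The edge density `ρ(Z)` of a set of vertices `Z`: the number of unordered adjacent
pairs in `Z` divided by `C(|Z|,2)`. -/
noncomputable def densSet {V : Type*} [Fintype V] (A : V → V → Prop) (Z : Set V) : ℝ :=
  ((Nat.card {p : V × V // p.1 ∈ Z ∧ p.2 ∈ Z ∧ (A p.1 p.2 ∨ A p.2 p.1)} : ℝ) / 2) /
    (Nat.choose (Nat.card Z) 2 : ℝ)

/-- `d = 1 − (E_{x ∈ X} ρ⁻_Y(x))/(1−α)`. -/
noncomputable def dXY {V : Type*} [Fintype V] (A : V → V → Prop) : ℝ :=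
  1 - ((∑ᶠ x ∈ bigX A, rhoMIn A (bigY A) x) / (Nat.card (bigX A) : ℝ)) / (1 - alphaX A)

/-- `OPT(k,l)`. -/
noncomputable def OPT (k l : ℕ) : ℝ :=
  if k = l then
    (1 / 2 ^ (2 * k)) *
      sSup {y : ℝ | ∃ a ∈ Set.Icc (0 : ℝ) 1, y = a * (1 - a) ^ (2 * k) + (1 - a) * a ^ (2 * k)}
  else
    sSup {y : ℝ | ∃ a ∈ Set.Icc (0 : ℝ) (1 / 2),
      ∃ d ∈ Set.Icc (0 : ℝ) ((k : ℝ) / ((k : ℝ) + (l : ℝ))),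
      y = a * (1 - a) ^ (k + l) * d ^ k * (1 - d) ^ l
        + (((k : ℝ) - 1) ^ (k - 1) * (l : ℝ) ^ l / ((k : ℝ) + (l : ℝ) - 1) ^ (k + l - 1))
          * (1 - a) * a ^ (k + l) * (1 - d)}

section helpers
open Finset

lemma amgm_aux (p q : ℕ) (a b t : ℝ) (ha : 0 ≤ a) (hb : 0 ≤ b) (hab : a + b ≤ t) :
    a ^ p * b ^ q * ((p : ℝ) + q) ^ (p + q) ≤ (p : ℝ) ^ p * (q : ℝ) ^ q * t ^ (p + q) := by
  have ht : 0 ≤ t := by linarith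
  rcases Nat.eq_zero_or_pos p with rfl | hp
  · simp only [pow_zero, Nat.cast_zero, zero_add, one_mul]
    rw [mul_comm]
    gcongr
    linarith
  rcases Nat.eq_zero_or_pos q with rfl | hq
  · simp only [pow_zero, Nat.cast_zero, add_zero, mul_one]
    rw [mul_comm]
    gcongr
    linarith
  have hp' : (0 : ℝ) < p := by exact_mod_cast hp
  have hq' : (0 : ℝ) < q := by exact_mod_cast hq
  have h := Real.geom_mean_le_arith_mean2_weighted (w₁ := (p : ℝ) / (p + q))
    (w₂ := (q : ℝ) / (p + q)) (p₁ := a / p) (p₂ := b / q) (by positivity) (by positivity)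
    (by positivity) (by positivity) (by field_simp)
  have h2 : ((a / p) ^ ((p : ℝ) / (p + q)) * (b / q) ^ ((q : ℝ) / (p + q))) ^ (p + q)
      ≤ (t / (p + q)) ^ (p + q) := by
    apply pow_le_pow_left₀ (by positivity)
    refine h.trans ?_
    rw [show (p : ℝ) / (p + q) * (a / p) + q / (p + q) * (b / q) = (a + b) / (p + q) by
      field_simp]
    gcongr
  rw [mul_pow, ← Real.rpow_mul_natCast (by positivity), ← Real.rpow_mul_natCast (by positivity)]
    at h2
  have e1 : (p : ℝ) / (p + q) * ((p + q : ℕ) : ℝ) = (p : ℝ) := by push_cast; field_simp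
  have e2 : (q : ℝ) / (p + q) * ((p + q : ℕ) : ℝ) = (q : ℝ) := by push_cast; field_simp
  rw [e1, e2, Real.rpow_natCast, Real.rpow_natCast, div_pow, div_pow, div_pow,
    div_mul_div_comm, div_le_div_iff₀ (by positivity) (by positivity)] at h2
  linarith

lemma mono_aux (n N : ℕ) (h : n ≤ N) :
    ((n : ℝ) + 1) ^ n * (N : ℝ) ^ N ≤ (n : ℝ) ^ n * ((N : ℝ) + 1) ^ N := by
  induction N, h using Nat.le_induction with
  | base => rw [mul_comm]
  | succ N hN ih =>
    have hs := amgm_aux N 1 ((N : ℝ) + 1) 1 ((N : ℝ) + 2) (by positivity) (by positivity)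
      (by linarith)
    simp only [Nat.cast_one, pow_one, mul_one] at hs
    have hpos : (0 : ℝ) < (N : ℝ) ^ N := by
      rcases Nat.eq_zero_or_pos N with rfl | h0
      · simp
      · positivity
    push_cast
    rw [show (N : ℝ) + 1 + 1 = N + 2 by ring]
    refine le_of_mul_le_mul_right ?_ hpos
    calc ((n : ℝ) + 1) ^ n * ((N : ℝ) + 1) ^ (N + 1) * (N : ℝ) ^ N
        = (((n : ℝ) + 1) ^ n * (N : ℝ) ^ N) * ((N : ℝ) + 1) ^ (N + 1) := by ring
      _ ≤ ((n : ℝ) ^ n * ((N : ℝ) + 1) ^ N) * ((N : ℝ) + 1) ^ (N + 1) := by gcongr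
      _ = (n : ℝ) ^ n * (((N : ℝ) + 1) ^ N * ((N : ℝ) + 1) ^ (N + 1)) := by ring
      _ ≤ (n : ℝ) ^ n * ((N : ℝ) ^ N * ((N : ℝ) + 2) ^ (N + 1)) := by gcongr
      _ = _ := by ring

lemma prod_in (k l p q : ℕ) (z : Fin (k + l + 1)) (hz : k + 1 ≤ z.val) :
    (∏ j : Fin (k + l + 1), (if j = z then 1 else if j.val = 0 then 1 else
      if j.val ≤ k then p else q)) = p ^ k * q ^ (l - 1) := by
  obtain ⟨i, rfl⟩ : ∃ i : Fin l, z = (Fin.natAdd k i).succ :=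
    ⟨⟨z.val - (k + 1), by omega⟩, by ext; simp; omega⟩
  rw [Fin.prod_univ_succ, Fin.prod_univ_add]
  have h1 : ∀ j : Fin k, (if (Fin.castAdd l j).succ = (Fin.natAdd k i).succ then 1 else
      if (Fin.castAdd l j).succ.val = 0 then 1 else
      if (Fin.castAdd l j).succ.val ≤ k then p else q) = p := by
    intro j
    have : (Fin.castAdd l j).succ ≠ (Fin.natAdd k i).succ := by
      intro h; have := congrArg Fin.val h; simp at this; omega
    rw [if_neg this]; simp
  have h2 : ∀ j : Fin l, (if (Fin.natAdd k j).succ = (Fin.natAdd k i).succ then 1 else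
      if (Fin.natAdd k j).succ.val = 0 then 1 else
      if (Fin.natAdd k j).succ.val ≤ k then p else q) = if j = i then 1 else q := by
    intro j
    simp [Fin.ext_iff]
  rw [prod_congr rfl (fun j _ => h1 j), prod_congr rfl (fun j _ => h2 j),
    ← mul_prod_erase univ _ (mem_univ i),
    prod_congr rfl (g := fun _ => q) (fun j hj => if_neg (ne_of_mem_erase hj))]
  simp

lemma prod_out (k l p q : ℕ) (z : Fin (k + l + 1)) (hz0 : 1 ≤ z.val) (hz : z.val ≤ k) :
    (∏ j : Fin (k + l + 1), (if j = z then 1 else if j.val = 0 then 1 else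
      if j.val ≤ k then p else q)) = p ^ (k - 1) * q ^ l := by
  obtain ⟨i, rfl⟩ : ∃ i : Fin k, z = (Fin.castAdd l i).succ :=
    ⟨⟨z.val - 1, by omega⟩, by ext; simp; omega⟩
  rw [Fin.prod_univ_succ, Fin.prod_univ_add]
  have h1 : ∀ j : Fin l, (if (Fin.natAdd k j).succ = (Fin.castAdd l i).succ then 1 else
      if (Fin.natAdd k j).succ.val = 0 then 1 else
      if (Fin.natAdd k j).succ.val ≤ k then p else q) = q := by
    intro j
    have : (Fin.natAdd k j).succ ≠ (Fin.castAdd l i).succ := by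
      intro h; have := congrArg Fin.val h; simp at this; omega
    rw [if_neg this]; simp
  have h2 : ∀ j : Fin k, (if (Fin.castAdd l j).succ = (Fin.castAdd l i).succ then 1 else
      if (Fin.castAdd l j).succ.val = 0 then 1 else
      if (Fin.castAdd l j).succ.val ≤ k then p else q) = if j = i then 1 else p := by
    intro j
    simp [Fin.ext_iff]
  rw [prod_congr rfl (fun j _ => h1 j), prod_congr rfl (fun j _ => h2 j),
    ← mul_prod_erase univ _ (mem_univ i),
    prod_congr rfl (g := fun _ => p) (fun j hj => if_neg (ne_of_mem_erase hj))]
  simp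

lemma prod_center (k l p q : ℕ) :
    (∏ j : Fin (k + l + 1), (if j.val = 0 then 1 else
      if j.val ≤ k then p else q)) = p ^ k * q ^ l := by
  rw [Fin.prod_univ_succ, Fin.prod_univ_add]
  simp

lemma natcard_sub {B : Type*} [Fintype B] (P : B → Prop) [DecidablePred P] :
    Nat.card {x // P x} = (univ.filter P).card := by
  rw [Nat.card_eq_fintype_card, Fintype.card_subtype]

open Classical in
/-- number of embeddings with the center at `v` and `z` at `w` -/
noncomputable def cnt (k l : ℕ) {V : Type*} [Fintype V] (A : V → V → Prop)
    (z : Fin (k + l + 1)) (v w : V) : ℕ :=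
  (univ.filter fun φ : Fin (k + l + 1) → V => IsStarEmb k l A φ ∧ φ 0 = v ∧ φ z = w).card

open Classical in
lemma cnt_le_prod (k l : ℕ) {V : Type*} [Fintype V] (A : V → V → Prop)
    (z : Fin (k + l + 1)) (hz : 1 ≤ z.val) (v w : V) :
    cnt k l A z v w ≤ ∏ j : Fin (k + l + 1), (if j = z then 1 else if j.val = 0 then 1 else
      if j.val ≤ k then (univ.filter fun u => A v u ∧ ¬ (A w u ∨ A u w)).card
      else (univ.filter fun u => A u v ∧ ¬ (A w u ∨ A u w)).card) := by
  let T : Fin (k + l + 1) → Finset V := fun j => if j = z then {w} else if j.val = 0 then {v} else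
      if j.val ≤ k then (univ.filter fun u => A v u ∧ ¬ (A w u ∨ A u w))
      else (univ.filter fun u => A u v ∧ ¬ (A w u ∨ A u w))
  have hT : ∏ j : Fin (k + l + 1), (if j = z then 1 else if j.val = 0 then 1 else
      if j.val ≤ k then (univ.filter fun u => A v u ∧ ¬ (A w u ∨ A u w)).card
      else (univ.filter fun u => A u v ∧ ¬ (A w u ∨ A u w)).card) = (Fintype.piFinset T).card := by
    rw [Fintype.card_piFinset]
    refine prod_congr rfl fun j _ => ?_
    simp only [T]
    split_ifs <;> simp
  rw [hT]
  refine card_le_card fun φ hφ => ?_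
  rw [mem_filter] at hφ
  obtain ⟨-, ⟨-, h⟩, rfl, rfl⟩ := hφ
  rw [Fintype.mem_piFinset]
  intro j
  have hzj : j.val ≠ 0 → ¬ (A (φ z) (φ j) ∨ A (φ j) (φ z)) := by
    intro hj
    rw [← h, ← h]
    unfold StarArc
    omega
  simp only [T]
  split_ifs with h1 h2 h3
  · simp [h1]
  · have : j = 0 := Fin.ext h2
    simp [this]
  · simp only [mem_filter, mem_univ, true_and]
    refine ⟨(h 0 j).1 ?_, hzj h2⟩
    unfold StarArc; simp; omega
  · simp only [mem_filter, mem_univ, true_and]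
    refine ⟨(h j 0).1 ?_, hzj h2⟩
    unfold StarArc; simp; omega

open Classical in
lemma cnt_zero_in (k l : ℕ) {V : Type*} [Fintype V] (A : V → V → Prop)
    (z : Fin (k + l + 1)) (hz : k + 1 ≤ z.val) (v w : V) (h : ¬ A w v) : cnt k l A z v w = 0 := by
  unfold cnt
  rw [card_eq_zero, filter_eq_empty_iff]
  rintro φ - ⟨⟨-, hh⟩, rfl, rfl⟩
  exact h ((hh z 0).1 (Or.inr ⟨rfl, hz⟩))

open Classical in
lemma cnt_zero_out (k l : ℕ) {V : Type*} [Fintype V] (A : V → V → Prop)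
    (z : Fin (k + l + 1)) (hz0 : 1 ≤ z.val) (hz : z.val ≤ k) (v w : V) (h : ¬ A v w) :
    cnt k l A z v w = 0 := by
  unfold cnt
  rw [card_eq_zero, filter_eq_empty_iff]
  rintro φ - ⟨⟨-, hh⟩, rfl, rfl⟩
  exact h ((hh 0 z).1 (Or.inl ⟨rfl, hz0, hz⟩))

lemma Dmin_le {V : Type*} [Fintype V] (A : V → V → Prop) (w : V) (hw : w ∈ bigX A) :
    Dmin A ≤ rho A w :=
  csInf_le (Set.toFinite _).bddBelow (Set.mem_image_of_mem _ hw)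

open Classical in
lemma PQ_le {V : Type*} [Fintype V] (A : V → V → Prop) (hopp : ∀ u v, A u v → ¬ A v u)
    (hn : 1 ≤ Fintype.card V) (v w : V) (hw : w ∈ bigX A) :
    ((univ.filter fun u => A v u ∧ ¬ (A w u ∨ A u w)).card : ℝ) +
      ((univ.filter fun u => A u v ∧ ¬ (A w u ∨ A u w)).card : ℝ) ≤
      (1 - Dmin A) * (Fintype.card V : ℝ) := by
  have hn' : (0 : ℝ) < Fintype.card V := by exact_mod_cast hn
  have h1 : (univ.filter fun u => A v u ∧ ¬ (A w u ∨ A u w)).card +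
      (univ.filter fun u => A u v ∧ ¬ (A w u ∨ A u w)).card ≤
      (univ.filter fun u => ¬ (A w u ∨ A u w)).card := by
    rw [← card_union_of_disjoint]
    · refine card_le_card fun u => ?_
      simp only [mem_union, mem_filter, mem_univ, true_and]
      tauto
    · rw [disjoint_filter]
      rintro u - ⟨h, -⟩ ⟨h', -⟩
      exact hopp _ _ h h'
  have h2 := card_filter_add_card_filter_not (s := (univ : Finset V)) (fun u => A w u ∨ A u w)
  have h3 := Dmin_le A w hw
  unfold rho at h3
  rw [natcard_sub, le_div_iff₀ hn'] at h3
  rw [card_univ] at h2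
  have h1' : ((univ.filter fun u => A v u ∧ ¬ (A w u ∨ A u w)).card : ℝ) +
      ((univ.filter fun u => A u v ∧ ¬ (A w u ∨ A u w)).card : ℝ) ≤
      ((univ.filter fun u => ¬ (A w u ∨ A u w)).card : ℝ) := by exact_mod_cast h1
  have h2' : ((univ.filter fun u => (A w u ∨ A u w)).card : ℝ) +
      ((univ.filter fun u => ¬ (A w u ∨ A u w)).card : ℝ) = Fintype.card V := by
    exact_mod_cast h2
  linarith

/-- the basic error term -/
noncomputable def errC (k l : ℕ) {V : Type*} [Fintype V] (A : V → V → Prop) : ℝ :=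
  lam1 k l * ((1 - Dmin A) * (Fintype.card V : ℝ)) ^ (k + l - 1)

open Classical in
lemma cnt_in (k l : ℕ) (hl : 1 ≤ l) (hlk : l ≤ k) {V : Type*} [Fintype V] (A : V → V → Prop)
    (hopp : ∀ u v, A u v → ¬ A v u) (hn : 1 ≤ Fintype.card V)
    (z : Fin (k + l + 1)) (hz : k + 1 ≤ z.val) (v w : V) (hw : w ∈ bigX A) :
    (l : ℝ) * cnt k l A z v w ≤ if A w v then errC k l A else 0 := by
  split_ifs with h
  · have h1 := cnt_le_prod k l A z (by omega) v w
    rw [prod_in k l _ _ z hz] at h1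
    have h2 := amgm_aux k (l - 1) _ _ _ (Nat.cast_nonneg _) (Nat.cast_nonneg _)
      (PQ_le A hopp hn v w hw)
    obtain ⟨q, rfl⟩ : ∃ q, l = q + 1 := ⟨l - 1, by omega⟩
    unfold errC lam1
    have e : k + (q + 1) - 1 = k + q := by omega
    simp only [Nat.add_sub_cancel, e] at h1 h2 ⊢
    have hk : (0 : ℝ) < k := by exact_mod_cast (by omega : 0 < k)
    have e2 : (k : ℝ) + ((q + 1 : ℕ) : ℝ) - 1 = k + q := by push_cast; ring
    have e3 : ((q + 1 : ℕ) : ℝ) - 1 = q := by push_cast; ring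
    rw [e2, e3, div_mul_eq_mul_div, le_div_iff₀ (by positivity)]
    have h1' := (Nat.cast_le (α := ℝ)).2 h1
    rw [Nat.cast_mul, Nat.cast_pow, Nat.cast_pow] at h1'
    have h3 :=
      (mul_le_mul_of_nonneg_right h1' (by positivity)).trans h2
    have h4 := mul_le_mul_of_nonneg_left h3 (Nat.cast_nonneg (α := ℝ) (q + 1))
    linarith
  · rw [cnt_zero_in k l A z hz v w h]; simp

open Classical in
lemma cnt_out (k l : ℕ) (hl : 1 ≤ l) (hlk : l ≤ k) (hm : 6 ≤ k + l)
    {V : Type*} [Fintype V] (A : V → V → Prop)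
    (hopp : ∀ u v, A u v → ¬ A v u) (hn : 1 ≤ Fintype.card V)
    (z : Fin (k + l + 1)) (hz0 : 1 ≤ z.val) (hz : z.val ≤ k) (v w : V) (hw : w ∈ bigX A) :
    (k : ℝ) * cnt k l A z v w ≤ if A v w then errC k l A else 0 := by
  split_ifs with h
  · have h1 := cnt_le_prod k l A z (by omega) v w
    rw [prod_out k l _ _ z hz0 hz] at h1
    have hPQ := PQ_le A hopp hn v w hw
    have h2 := amgm_aux (k - 1) l _ _ _ (Nat.cast_nonneg _) (Nat.cast_nonneg _) hPQ
    have ht : 0 ≤ (1 - Dmin A) * (Fintype.card V : ℝ) := le_trans (by positivity) hPQ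
    obtain ⟨q, rfl⟩ : ∃ q, l = q + 1 := ⟨l - 1, by omega⟩
    obtain ⟨p, rfl⟩ : ∃ p, k = p + 1 := ⟨k - 1, by omega⟩
    have hmono := mono_aux q p (by omega)
    unfold errC lam1
    have e : p + 1 + (q + 1) - 1 = p + 1 + q := by omega
    have e' : p + (q + 1) = p + 1 + q := by omega
    simp only [Nat.add_sub_cancel, e, e'] at h1 h2 ⊢
    have e2 : ((p + 1 : ℕ) : ℝ) + ((q + 1 : ℕ) : ℝ) - 1 = p + ((q + 1 : ℕ) : ℝ) := by
      push_cast; ring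
    have e3 : ((q + 1 : ℕ) : ℝ) - 1 = q := by push_cast; ring
    rw [e2, e3, div_mul_eq_mul_div, le_div_iff₀ (by positivity)]
    have h1' := (Nat.cast_le (α := ℝ)).2 h1
    rw [Nat.cast_mul, Nat.cast_pow, Nat.cast_pow] at h1'
    have h3 :=
      (mul_le_mul_of_nonneg_right h1' (by positivity)).trans h2
    have h4 := mul_le_mul_of_nonneg_left h3 (Nat.cast_nonneg (α := ℝ) (p + 1))
    rw [← mul_assoc] at h4
    refine h4.trans ?_
    rw [← mul_assoc]
    refine mul_le_mul_of_nonneg_right ?_ (pow_nonneg ht _)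
    push_cast
    have h5 := mul_le_mul_of_nonneg_left hmono
      (by positivity : (0 : ℝ) ≤ ((p : ℝ) + 1) * ((q : ℝ) + 1))
    calc _ = ((p : ℝ) + 1) * ((q : ℝ) + 1) * (((q : ℝ) + 1) ^ q * (p : ℝ) ^ p) := by ring
      _ ≤ _ := h5
      _ = _ := by ring
  · rw [cnt_zero_out k l A z hz0 hz v w h]; simp

open Classical in
lemma leaf_in (k l : ℕ) (hl : 1 ≤ l) (hlk : l ≤ k) {V : Type*} [Fintype V] (A : V → V → Prop)
    (hopp : ∀ u v, A u v → ¬ A v u) (hn : 1 ≤ Fintype.card V)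
    (z : Fin (k + l + 1)) (hz : k + 1 ≤ z.val) (x : V) (hx : x ∈ bigX A) :
    (l : ℝ) * (Nat.card {φ : Fin (k + l + 1) → V // IsStarEmb k l A φ ∧ φ z = x} : ℝ) ≤
      ((univ.filter fun v => A x v).card : ℝ) * errC k l A := by
  have h1 : Nat.card {φ : Fin (k + l + 1) → V // IsStarEmb k l A φ ∧ φ z = x}
      = ∑ v : V, cnt k l A z v x := by
    rw [natcard_sub, card_eq_sum_card_fiberwise (f := fun φ => φ 0) (t := univ)
      (fun _ _ => by simp)]
    refine sum_congr rfl fun v _ => ?_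
    unfold cnt
    rw [filter_filter]
    congr 1
    ext φ
    simp only [mem_filter, mem_univ, true_and]
    tauto
  rw [h1, Nat.cast_sum, mul_sum]
  refine (sum_le_sum fun v _ => cnt_in k l hl hlk A hopp hn z hz v x hx).trans ?_
  rw [← sum_filter, sum_const, nsmul_eq_mul]

open Classical in
lemma leaf_out (k l : ℕ) (hl : 1 ≤ l) (hlk : l ≤ k) (hm : 6 ≤ k + l)
    {V : Type*} [Fintype V] (A : V → V → Prop)
    (hopp : ∀ u v, A u v → ¬ A v u) (hn : 1 ≤ Fintype.card V)
    (z : Fin (k + l + 1)) (hz0 : 1 ≤ z.val) (hz : z.val ≤ k) (x : V) (hx : x ∈ bigX A) :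
    (k : ℝ) * (Nat.card {φ : Fin (k + l + 1) → V // IsStarEmb k l A φ ∧ φ z = x} : ℝ) ≤
      ((univ.filter fun v => A v x).card : ℝ) * errC k l A := by
  have h1 : Nat.card {φ : Fin (k + l + 1) → V // IsStarEmb k l A φ ∧ φ z = x}
      = ∑ v : V, cnt k l A z v x := by
    rw [natcard_sub, card_eq_sum_card_fiberwise (f := fun φ => φ 0) (t := univ)
      (fun _ _ => by simp)]
    refine sum_congr rfl fun v _ => ?_
    unfold cnt
    rw [filter_filter]
    congr 1
    ext φ
    simp only [mem_filter, mem_univ, true_and]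
    tauto
  rw [h1, Nat.cast_sum, mul_sum]
  refine (sum_le_sum fun v _ => cnt_out k l hl hlk hm A hopp hn z hz0 hz v x hx).trans ?_
  rw [← sum_filter, sum_const, nsmul_eq_mul]

open Classical in
lemma center_nat (k l : ℕ) {V : Type*} [Fintype V] (A : V → V → Prop) (x : V) :
    Nat.card {φ : Fin (k + l + 1) → V // IsStarEmb k l A φ ∧ φ 0 = x} ≤
      (univ.filter fun u => A x u ∧ u ∈ bigY A).card ^ k *
        (univ.filter fun u => A u x ∧ u ∈ bigY A).card ^ l +
      ∑ i : Fin (k + l), ∑ w ∈ univ.filter (fun w => w ∈ bigX A), cnt k l A i.succ x w := by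
  let T : Fin (k + l + 1) → Finset V := fun j => if j.val = 0 then {x} else
      if j.val ≤ k then (univ.filter fun u => A x u ∧ u ∈ bigY A)
      else (univ.filter fun u => A u x ∧ u ∈ bigY A)
  have hT : (univ.filter fun u => A x u ∧ u ∈ bigY A).card ^ k *
        (univ.filter fun u => A u x ∧ u ∈ bigY A).card ^ l = (Fintype.piFinset T).card := by
    rw [Fintype.card_piFinset, ← prod_center]
    refine prod_congr rfl fun j _ => ?_
    simp only [T]
    split_ifs <;> simp
  rw [hT, natcard_sub]
  have hsub : (univ.filter fun φ : Fin (k + l + 1) → V => IsStarEmb k l A φ ∧ φ 0 = x) ⊆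
      Fintype.piFinset T ∪ (univ : Finset (Fin (k + l))).biUnion (fun i =>
        (univ.filter (fun w => w ∈ bigX A)).biUnion fun w =>
          univ.filter fun φ : Fin (k + l + 1) → V =>
            IsStarEmb k l A φ ∧ φ 0 = x ∧ φ i.succ = w) := by
    intro φ hφ
    rw [mem_filter] at hφ
    obtain ⟨-, hemb, rfl⟩ := hφ
    rw [mem_union]
    by_cases hall : ∀ i : Fin (k + l), φ i.succ ∈ bigY A
    · left
      rw [Fintype.mem_piFinset]
      intro j
      have hj : j.val ≠ 0 → φ j ∈ bigY A := by
        intro hj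
        obtain ⟨i, rfl⟩ := Fin.exists_succ_eq.2 (fun h => hj (by simp [h]) : j ≠ 0)
        exact hall i
      simp only [T]
      split_ifs with h2 h3
      · have : j = 0 := Fin.ext h2
        simp [this]
      · simp only [mem_filter, mem_univ, true_and]
        refine ⟨(hemb.2 0 j).1 ?_, hj h2⟩
        unfold StarArc; simp; omega
      · simp only [mem_filter, mem_univ, true_and]
        refine ⟨(hemb.2 j 0).1 ?_, hj h2⟩
        unfold StarArc; simp; omega
    · right
      push Not at hall
      obtain ⟨i, hi⟩ := hall
      have hi' : φ i.succ ∈ bigX A := by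
        by_contra h; exact hi h
      simp only [mem_biUnion, mem_filter, mem_univ, true_and]
      exact ⟨i, φ i.succ, hi', hemb, rfl⟩
  refine (card_le_card hsub).trans ((card_union_le _ _).trans ?_)
  refine Nat.add_le_add_left ?_ _
  refine card_biUnion_le.trans (sum_le_sum fun i _ => ?_)
  exact card_biUnion_le

open Classical in
lemma center_real (k l : ℕ) (hl : 1 ≤ l) (hlk : l ≤ k) (hm : 6 ≤ k + l)
    {V : Type*} [Fintype V] (A : V → V → Prop)
    (hopp : ∀ u v, A u v → ¬ A v u) (hn : 1 ≤ Fintype.card V) (x : V) :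
    (Nat.card {φ : Fin (k + l + 1) → V // IsStarEmb k l A φ ∧ φ 0 = x} : ℝ) ≤
      ((univ.filter fun u => A x u ∧ u ∈ bigY A).card : ℝ) ^ k *
        ((univ.filter fun u => A u x ∧ u ∈ bigY A).card : ℝ) ^ l +
      (((univ.filter fun w => w ∈ bigX A ∧ A x w).card : ℝ) +
        ((univ.filter fun w => w ∈ bigX A ∧ A w x).card : ℝ)) * errC k l A := by
  have h := (Nat.cast_le (α := ℝ)).2 (center_nat k l A x)
  refine h.trans ?_
  push_cast
  have hk : (0 : ℝ) < k := by exact_mod_cast (by omega : 0 < k)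
  have hl' : (0 : ℝ) < l := by exact_mod_cast hl
  gcongr
  rw [Fin.sum_univ_add, add_mul]
  apply add_le_add
  · have : ∀ i : Fin k, (∑ w ∈ univ.filter (fun w => w ∈ bigX A),
        (cnt k l A (Fin.castAdd l i).succ x w : ℝ)) ≤
        ((univ.filter fun w => w ∈ bigX A ∧ A x w).card : ℝ) * errC k l A / k := by
      intro i
      rw [le_div_iff₀' hk, mul_sum]
      refine (sum_le_sum fun w hw => cnt_out k l hl hlk hm A hopp hn _ (by simp)
        (by simp) x w (mem_filter.1 hw).2).trans ?_
      rw [← sum_filter, sum_const, nsmul_eq_mul, filter_filter]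
    refine (sum_le_sum fun i _ => this i).trans ?_
    rw [sum_const, nsmul_eq_mul, card_univ, Fintype.card_fin, mul_div_cancel₀ _ hk.ne']
  · have : ∀ i : Fin l, (∑ w ∈ univ.filter (fun w => w ∈ bigX A),
        (cnt k l A (Fin.natAdd k i).succ x w : ℝ)) ≤
        ((univ.filter fun w => w ∈ bigX A ∧ A w x).card : ℝ) * errC k l A / l := by
      intro i
      rw [le_div_iff₀' hl', mul_sum]
      refine (sum_le_sum fun w hw => cnt_in k l hl hlk A hopp hn _ (by simp)
        x w (mem_filter.1 hw).2).trans ?_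
      rw [← sum_filter, sum_const, nsmul_eq_mul, filter_filter]
    refine (sum_le_sum fun i _ => this i).trans ?_
    rw [sum_const, nsmul_eq_mul, card_univ, Fintype.card_fin, mul_div_cancel₀ _ hl'.ne']

open Classical in
lemma disj_card {V : Type*} [Fintype V] (A : V → V → Prop)
    (hopp : ∀ u v, A u v → ¬ A v u) (B : Set V) (x : V) :
    ((univ.filter fun w => w ∈ B ∧ A x w).card : ℝ) +
        ((univ.filter fun w => w ∈ B ∧ A w x).card : ℝ) ≤
      ((univ.filter fun w => w ∈ B).card : ℝ) := by
  have : (univ.filter fun w => w ∈ B ∧ A x w).card +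
        (univ.filter fun w => w ∈ B ∧ A w x).card ≤ (univ.filter fun w => w ∈ B).card := by
    rw [← card_union_of_disjoint]
    · refine card_le_card fun u => ?_
      simp only [mem_union, mem_filter, mem_univ, true_and]
      tauto
    · rw [disjoint_filter]
      rintro u - ⟨-, h⟩ ⟨-, h'⟩
      exact hopp _ _ h h'
  exact_mod_cast this

lemma lam1_nonneg (k l : ℕ) (hl : 1 ≤ l) : 0 ≤ lam1 k l := by
  unfold lam1
  have hl' : (1 : ℝ) ≤ l := by exact_mod_cast hl
  have h1 : (0 : ℝ) ≤ (l : ℝ) - 1 := by linarith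
  have h2 : (0 : ℝ) ≤ (k : ℝ) + l - 1 := by
    have : (0 : ℝ) ≤ k := Nat.cast_nonneg _
    linarith
  positivity

lemma Dmin_le_one {V : Type*} [Fintype V] (A : V → V → Prop)
    (hn : 1 ≤ Fintype.card V) (hX : (bigX A).Nonempty) : Dmin A ≤ 1 := by
  classical
  obtain ⟨x, hx⟩ := hX
  refine (Dmin_le A x hx).trans ?_
  unfold rho
  apply div_le_one_of_le₀ _ (by positivity)
  rw [natcard_sub]
  exact_mod_cast card_le_univ _

open Classical in
lemma part3 (k l : ℕ) (hl : 1 ≤ l) (hlk : l ≤ k) (hm : 6 ≤ k + l)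
    {V : Type*} [Fintype V] (A : V → V → Prop)
    (hopp : ∀ u v, A u v → ¬ A v u) (hn : 1 ≤ Fintype.card V) (x : V) (hx : x ∈ bigX A) :
    ((k : ℝ) + l + 1) * sVert k l A x ≤
      rhoPIn A (bigY A) x ^ k * rhoMIn A (bigY A) x ^ l +
      lam1 k l * (1 + alphaX A) * (1 - Dmin A) ^ (k + l - 1) := by
  have hn' : (0 : ℝ) < Fintype.card V := by exact_mod_cast hn
  have hD := Dmin_le_one A hn ⟨x, hx⟩
  have hE : 0 ≤ errC k l A :=
    mul_nonneg (lam1_nonneg k l hl) (pow_nonneg (mul_nonneg (by linarith) hn'.le) _)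
  have h1 := center_real k l hl hlk hm A hopp hn x
  have hv1 : ((1 : Fin (k + l + 1)) : ℕ) = 1 := by
    rw [Fin.val_one']; exact Nat.mod_eq_of_lt (by omega)
  have h2 := leaf_out k l hl hlk hm A hopp hn 1 (by omega) (by omega) x hx
  have hd1 := disj_card A hopp (bigX A) x
  have hd2 := disj_card A hopp Set.univ x
  simp only [Set.mem_univ, true_and, filter_true, card_univ] at hd2
  have e : ((k : ℝ) + l + 1) * sVert k l A x = sCond k l A 0 x
      + l * sCond k l A (@Nat.cast (Fin (k + l + 1)) (Fin.NatCast.instNatCast (k + l + 1)) (k + 1)) x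
      + k * sCond k l A 1 x := by
    unfold sVert
    have : (k : ℝ) + l + 1 ≠ 0 := by positivity
    field_simp
  have hv2 : ((@Nat.cast (Fin (k + l + 1)) (Fin.NatCast.instNatCast (k + l + 1)) (k + 1)
      : Fin (k + l + 1)) : ℕ) = k + 1 := by
    rw [Fin.val_natCast]; exact Nat.mod_eq_of_lt (by omega)
  generalize (@Nat.cast (Fin (k + l + 1)) (Fin.NatCast.instNatCast (k + l + 1)) (k + 1)) = z
    at e hv2
  have h3 := leaf_in k l hl hlk A hopp hn z hv2.ge x hx
  rw [e]
  unfold sCond rhoPIn rhoMIn alphaX muSet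
  have ha : (Nat.card (bigX A) : ℝ) = ((univ.filter fun w => w ∈ bigX A).card : ℝ) := by
    rw [← natcard_sub]
  rw [ha, natcard_sub (fun u => A x u ∧ u ∈ bigY A), natcard_sub (fun u => A u x ∧ u ∈ bigY A)]
  have hfin : (Nat.card {φ : Fin (k + l + 1) → V // IsStarEmb k l A φ ∧ φ 0 = x} : ℝ)
      + l * (Nat.card {φ : Fin (k + l + 1) → V // IsStarEmb k l A φ ∧ φ z = x} : ℝ)
      + k * (Nat.card {φ : Fin (k + l + 1) → V // IsStarEmb k l A φ ∧ φ 1 = x} : ℝ) ≤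
      ((univ.filter fun u => A x u ∧ u ∈ bigY A).card : ℝ) ^ k *
        ((univ.filter fun u => A u x ∧ u ∈ bigY A).card : ℝ) ^ l +
      ((Fintype.card V : ℝ) + ((univ.filter fun w => w ∈ bigX A).card : ℝ)) * errC k l A := by
    have := mul_le_mul_of_nonneg_right hd1 hE
    have := mul_le_mul_of_nonneg_right hd2 hE
    linarith
  have hfin2 := div_le_div_of_nonneg_right hfin (pow_nonneg hn'.le (k + l))
  refine le_trans (le_of_eq ?_) (hfin2.trans (le_of_eq ?_))
  · ring
  · unfold errC
    obtain ⟨r, hr⟩ : ∃ r, k + l = r + 1 := ⟨k + l - 1, by omega⟩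
    rw [add_div]
    congr 1
    · rw [div_pow, div_pow, div_mul_div_comm, pow_add]
    · rw [hr, Nat.add_sub_cancel, mul_pow]
      field_simp
      ring

open Classical in
lemma PQY_le {V : Type*} [Fintype V] (A : V → V → Prop)
    (hopp : ∀ u v, A u v → ¬ A v u) (hn : 1 ≤ Fintype.card V) (x : V) :
    rhoPIn A (bigY A) x + rhoMIn A (bigY A) x ≤ 1 - alphaX A := by
  have hn' : (0 : ℝ) < Fintype.card V := by exact_mod_cast hn
  have hd := disj_card A hopp (bigY A) x
  unfold rhoPIn rhoMIn alphaX muSet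
  have ha : (Nat.card (bigX A) : ℝ) = ((univ.filter fun w => w ∈ bigX A).card : ℝ) := by
    rw [← natcard_sub]
  rw [ha, natcard_sub (fun u => A x u ∧ u ∈ bigY A), natcard_sub (fun u => A u x ∧ u ∈ bigY A)]
  simp only [and_comm (b := _ ∈ bigY A)]
  have h2 := card_filter_add_card_filter_not (s := (univ : Finset V)) (fun u => u ∈ bigX A)
  rw [card_univ] at h2
  have h2' : ((univ.filter fun w => w ∈ bigX A).card : ℝ) +
      ((univ.filter fun w => w ∈ bigY A).card : ℝ) = Fintype.card V := by
    rw [← h2]; push_cast; congr 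
  rw [← add_div, one_sub_div hn'.ne']
  gcongr
  linarith

end helpers

theorem stmt10 (k l : ℕ) (hl : 1 ≤ l) (hlk : l ≤ k) (hm : 6 ≤ k + l)
    (V : Type) [Fintype V] (A : V → V → Prop)
    (hirr : Irreflexive A) (hopp : ∀ u v, A u v → ¬ A v u) (hn : 1 ≤ Fintype.card V)
    (hX : (bigX A).Nonempty) :
    lam0 k l * (1 - alphaX A) ^ (k + l) ≥ gammaX A ^ l * (1 - alphaX A - gammaX A) ^ k ∧
    gammaX A ^ l * (1 - alphaX A - gammaX A) ^ k ≥ S1min k l A ∧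
    S1min k l A ≥ Smin k l A - lam1 k l * (1 + alphaX A) * (1 - Dmin A) ^ (k + l - 1) := by
  have hPn : ∀ x, 0 ≤ rhoPIn A (bigY A) x := fun x => by unfold rhoPIn; positivity
  have hMn : ∀ x, 0 ≤ rhoMIn A (bigY A) x := fun x => by unfold rhoMIn; positivity
  obtain ⟨x, hx, hxg⟩ : ∃ x ∈ bigX A, rhoMIn A (bigY A) x = gammaX A :=
    (hX.image (fun x => rhoMIn A (bigY A) x)).csInf_mem (Set.toFinite _)
  obtain ⟨y, hy, hyS⟩ : ∃ y ∈ bigX A, rhoPIn A (bigY A) y ^ k * rhoMIn A (bigY A) y ^ l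
      = S1min k l A :=
    (hX.image (fun x => rhoPIn A (bigY A) x ^ k * rhoMIn A (bigY A) x ^ l)).csInf_mem
      (Set.toFinite _)
  have hPQ := PQY_le A hopp hn x
  refine ⟨?_, ?_, ?_⟩
  · have hk : (0 : ℝ) < k := by exact_mod_cast (by omega : 0 < k)
    have h := amgm_aux k l (1 - alphaX A - gammaX A) (gammaX A) (1 - alphaX A)
      (by linarith [hPn x]) (by rw [← hxg]; exact hMn x) (by linarith)
    unfold lam0
    rw [ge_iff_le, div_mul_eq_mul_div, le_div_iff₀ (by positivity)]
    linarith
  · have h : S1min k l A ≤ rhoPIn A (bigY A) x ^ k * rhoMIn A (bigY A) x ^ l :=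
      csInf_le (Set.toFinite _).bddBelow
        (Set.mem_image_of_mem (fun x => rhoPIn A (bigY A) x ^ k * rhoMIn A (bigY A) x ^ l) hx)
    refine h.trans ?_
    rw [mul_comm, hxg]
    refine mul_le_mul_of_nonneg_left (pow_le_pow_left₀ (hPn x) (by linarith) _)
      (pow_nonneg (by rw [← hxg]; exact hMn x) _)
  · have h3 := part3 k l hl hlk hm A hopp hn y hy
    rw [hyS] at h3
    have h4 : Smin k l A ≤ ((k : ℝ) + l + 1) * sVert k l A y := by
      unfold Smin
      refine mul_le_mul_of_nonneg_left ?_ (by positivity)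
      exact csInf_le (Set.finite_range _).bddBelow (Set.mem_range_self y)
    linarith
end

section
/- Suppose X ≠ ∅ and Y ≠ ∅. Then λ₀ α (1−α)^m + λ₁ α (1−D)^{m−1} + λ₀ (1−α) β^m ≥ S/(m+1). -/
open scoped BigOperators

namespace Stmt12Aux
open Finset

noncomputable def L (p q : ℕ) : ℝ := (p : ℝ) ^ p * (q : ℝ) ^ q / ((p : ℝ) + q) ^ (p + q)

theorem L_nonneg (p q : ℕ) : 0 ≤ L p q := by unfold L; positivity

theorem amgm' (p q : ℕ) (hp : 0 < p) (hq : 0 < q) (a b : ℝ) (ha : 0 ≤ a) (hb : 0 ≤ b) :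
    (a / p) ^ p * (b / q) ^ q ≤ ((a + b) / (p + q)) ^ (p + q) := by
  have hp' : (0 : ℝ) < p := by exact_mod_cast hp
  have hq' : (0 : ℝ) < q := by exact_mod_cast hq
  have h := Real.geom_mean_le_arith_mean2_weighted (w₁ := (p : ℝ) / (p + q))
    (w₂ := (q : ℝ) / (p + q)) (p₁ := a / p) (p₂ := b / q) (by positivity) (by positivity)
    (by positivity) (by positivity) (by field_simp)
  have h2 : (p : ℝ) / (p + q) * (a / p) + (q : ℝ) / (p + q) * (b / q) = (a + b) / (p + q) := by
    field_simp
  rw [h2] at h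
  have h3 := pow_le_pow_left₀ (by positivity) h (p + q)
  rw [mul_pow, ← Real.rpow_mul_natCast (by positivity), ← Real.rpow_mul_natCast (by positivity)] at h3
  have e1 : (p : ℝ) / (p + q) * ((p + q : ℕ) : ℝ) = p := by push_cast; field_simp
  have e2 : (q : ℝ) / (p + q) * ((p + q : ℕ) : ℝ) = q := by push_cast; field_simp
  rw [e1, e2, Real.rpow_natCast, Real.rpow_natCast] at h3
  exact h3

theorem amgm (p q : ℕ) (a b : ℝ) (ha : 0 ≤ a) (hb : 0 ≤ b) :
    a ^ p * b ^ q ≤ L p q * (a + b) ^ (p + q) := by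
  unfold L
  rcases Nat.eq_zero_or_pos p with rfl | hp
  · rcases Nat.eq_zero_or_pos q with rfl | hq
    · simp
    · have hq' : (0 : ℝ) < q := by exact_mod_cast hq
      simp only [pow_zero, Nat.cast_zero, zero_add, one_mul]
      rw [div_self (by positivity), one_mul]
      exact pow_le_pow_left₀ hb (by linarith) _
  · have hp' : (0 : ℝ) < p := by exact_mod_cast hp
    rcases Nat.eq_zero_or_pos q with rfl | hq
    · simp only [pow_zero, Nat.cast_zero, add_zero, mul_one]
      rw [div_self (by positivity), one_mul]
      exact pow_le_pow_left₀ ha (by linarith) _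
    · have hq' : (0 : ℝ) < q := by exact_mod_cast hq
      have h := amgm' p q hp hq a b ha hb
      rw [div_pow, div_pow, div_pow, div_mul_div_comm, div_le_div_iff₀ (by positivity) (by positivity)] at h
      rw [div_mul_eq_mul_div, le_div_iff₀ (by positivity)]
      linarith

theorem amgm_le (p q : ℕ) (a b r : ℝ) (ha : 0 ≤ a) (hb : 0 ≤ b) (h : a + b ≤ r) :
    a ^ p * b ^ q ≤ L p q * r ^ (p + q) :=
  (amgm p q a b ha hb).trans
    (mul_le_mul_of_nonneg_left (pow_le_pow_left₀ (by positivity) h _) (L_nonneg p q))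

theorem lam0_eq (k l : ℕ) : lam0 k l = L k l := rfl

theorem lam1_eq (k l : ℕ) : lam1 k (l + 1) = (l + 1 : ℕ) * L k l := by
  unfold lam1 L
  have : k + (l + 1) - 1 = k + l := by omega
  rw [this]
  push_cast
  rw [show (k : ℝ) + (l + 1) - 1 = k + l by ring, show (l : ℝ) + 1 - 1 = l by ring]
  ring

/-- `j = l-1`, `i = k-1`. -/
theorem cmp (i j : ℕ) (h : j ≤ i) :
    (i : ℝ) ^ i * ((j : ℝ) + 1) ^ j ≤ ((i : ℝ) + 1) ^ i * (j : ℝ) ^ j := by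
  obtain ⟨d, rfl⟩ := Nat.exists_eq_add_of_le h
  have h1 := amgm j d ((j : ℝ) + 1) d (by positivity) (by positivity)
  unfold L at h1
  have hd : (0 : ℝ) < (d : ℝ) ^ d := by
    rcases Nat.eq_zero_or_pos d with rfl | hd
    · simp
    · positivity
  have hs : (0 : ℝ) < ((j : ℝ) + d) ^ (j + d) := by
    rcases Nat.eq_zero_or_pos (j + d) with h0 | h0
    · rw [h0]; simp
    · have : (0 : ℝ) < (j : ℝ) + d := by exact_mod_cast h0
      positivity
  rw [div_mul_eq_mul_div, le_div_iff₀ hs] at h1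
  push_cast
  refine le_of_mul_le_mul_right ?_ hd
  rw [show (j : ℝ) + d + 1 = j + 1 + d by ring]
  linarith

theorem lam1_ge (k l : ℕ) (h : l ≤ k) : ((k + 1 : ℕ) : ℝ) * L k (l + 1) ≤ lam1 (k + 1) (l + 1) := by
  rw [lam1_eq]
  unfold L
  push_cast
  rw [show (k : ℝ) + (l + 1) = k + 1 + l by ring, show k + (l + 1) = k + 1 + l by ring,
    ← mul_div_assoc, ← mul_div_assoc]
  refine div_le_div_of_nonneg_right ?_ (by positivity)
  have := mul_le_mul_of_nonneg_left (cmp k l h) (show (0:ℝ) ≤ ((k : ℝ) + 1) * (l + 1) by positivity)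
  rw [pow_succ, pow_succ]
  linarith

open Classical in
theorem box {ι V : Type*} [Fintype ι] [Fintype V] (P Q : Finset ι) (hPQ : Disjoint P Q)
    (Sa Sb : Finset V) (c : ι → V) (Φ : Finset (ι → V))
    (hP : ∀ φ ∈ Φ, ∀ j ∈ P, φ j ∈ Sa) (hQ : ∀ φ ∈ Φ, ∀ j ∈ Q, φ j ∈ Sb)
    (hR : ∀ φ ∈ Φ, ∀ j, j ∉ P → j ∉ Q → φ j = c j) :
    #Φ ≤ #Sa ^ #P * #Sb ^ #Q := by
  have h1 : Φ ⊆ Fintype.piFinset (fun j => if j ∈ P then Sa else if j ∈ Q then Sb else {c j}) := by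
    intro φ hφ
    rw [Fintype.mem_piFinset]
    intro j
    by_cases h1 : j ∈ P
    · simpa [h1] using hP φ hφ j h1
    · by_cases h2 : j ∈ Q
      · simpa [h1, h2] using hQ φ hφ j h2
      · simpa [h1, h2] using hR φ hφ j h1 h2
  refine (card_le_card h1).trans (le_of_eq ?_)
  rw [Fintype.card_piFinset]
  have : ∀ j, #(if j ∈ P then Sa else if j ∈ Q then Sb else {c j})
      = (if j ∈ P then #Sa else 1) * (if j ∈ Q then #Sb else 1) := by
    intro j
    by_cases h1 : j ∈ P
    · have h2 := Finset.disjoint_left.1 hPQ h1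
      simp [h1, h2]
    · by_cases h2 : j ∈ Q <;> simp [h1, h2]
  simp_rw [this]
  rw [prod_mul_distrib]
  simp [prod_ite_mem]

def outL (k l : ℕ) : Finset (Fin (k + l + 1)) := univ.filter (fun j => 1 ≤ j.val ∧ j.val ≤ k)
def inL (k l : ℕ) : Finset (Fin (k + l + 1)) := univ.filter (fun j => k + 1 ≤ j.val)

theorem card_outL (k l : ℕ) : #(outL k l) = k := by
  have : (outL k l).map Fin.valEmbedding = Finset.Icc 1 k := by
    ext x
    simp only [outL, mem_map, mem_filter, mem_univ, true_and, Fin.valEmbedding_apply, mem_Icc]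
    constructor
    · rintro ⟨a, h, rfl⟩; exact h
    · intro h; exact ⟨⟨x, by omega⟩, h, rfl⟩
  rw [← card_map Fin.valEmbedding, this]; simp

theorem card_inL (k l : ℕ) : #(inL k l) = l := by
  have : (inL k l).map Fin.valEmbedding = Finset.Icc (k + 1) (k + l) := by
    ext x
    simp only [inL, mem_map, mem_filter, mem_univ, true_and, Fin.valEmbedding_apply, mem_Icc]
    constructor
    · rintro ⟨a, h, rfl⟩; exact ⟨h, by omega⟩
    · intro h; exact ⟨⟨x, by omega⟩, h.1, rfl⟩
  rw [← card_map Fin.valEmbedding, this]; simp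

theorem disj (k l : ℕ) : Disjoint (outL k l) (inL k l) := by
  rw [Finset.disjoint_left]
  intro j
  simp only [outL, inL, mem_filter, mem_univ, true_and]
  omega

theorem mem_leaf (k l : ℕ) (j : Fin (k + l + 1)) (hj : j ≠ 0) : j ∈ outL k l ∨ j ∈ inL k l := by
  have : j.val ≠ 0 := fun h => hj (Fin.ext h)
  simp only [outL, inL, mem_filter, mem_univ, true_and]
  omega

theorem emb_out {k l : ℕ} {V : Type*} {A : V → V → Prop} {φ : Fin (k + l + 1) → V}
    (h : IsStarEmb k l A φ) {j} (hj : j ∈ outL k l) : A (φ 0) (φ j) := by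
  simp only [outL, mem_filter, mem_univ, true_and] at hj
  exact (h.2 0 j).1 (Or.inl ⟨rfl, hj⟩)

theorem emb_in {k l : ℕ} {V : Type*} {A : V → V → Prop} {φ : Fin (k + l + 1) → V}
    (h : IsStarEmb k l A φ) {j} (hj : j ∈ inL k l) : A (φ j) (φ 0) := by
  simp only [inL, mem_filter, mem_univ, true_and] at hj
  exact (h.2 j 0).1 (Or.inr ⟨rfl, hj⟩)

theorem emb_non {k l : ℕ} {V : Type*} {A : V → V → Prop} {φ : Fin (k + l + 1) → V}
    (h : IsStarEmb k l A φ) {i j} (hi : i ≠ 0) (hj : j ≠ 0) : ¬ A (φ i) (φ j) := by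
  rw [← h.2 i j]
  have hi : i.val ≠ 0 := fun h => hi (Fin.ext h)
  have hj : j.val ≠ 0 := fun h => hj (Fin.ext h)
  rintro (h | h)
  · exact hi h.1
  · exact hj h.1

theorem leaf_ne {k l : ℕ} {j : Fin (k + l + 1)} (hj : j ∈ outL k l ∨ j ∈ inL k l) : j ≠ 0 := by
  rintro rfl
  simp [outL, inL] at hj

section
variable {V : Type} [Fintype V] (A : V → V → Prop)

open Classical in
noncomputable def Op (S : Finset V) (c : V) : Finset V := S.filter (fun u => A c u)
open Classical in
noncomputable def Im (S : Finset V) (c : V) : Finset V := S.filter (fun u => A u c)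
open Classical in
noncomputable def Non (x : V) : Finset V := univ.filter (fun u => ¬ A x u ∧ ¬ A u x)
open Classical in
noncomputable def F (k l : ℕ) : Finset (Fin (k + l + 1) → V) := univ.filter (IsStarEmb k l A)

theorem mem_F {k l : ℕ} {φ : Fin (k + l + 1) → V} : φ ∈ F A k l ↔ IsStarEmb k l A φ := by simp [F]

variable {A}

open Classical in
theorem Op_Im (hopp : ∀ u v, A u v → ¬ A v u) (S : Finset V) (c : V) :
    #(Op A S c) + #(Im A S c) = #(S.filter (fun u => A c u ∨ A u c)) := by
  rw [filter_or, card_union_of_disjoint]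
  · rfl
  · rw [Finset.disjoint_left]
    intro u h1 h2
    exact hopp _ _ (mem_filter.1 h1).2 (mem_filter.1 h2).2

theorem Op_Im_le (hopp : ∀ u v, A u v → ¬ A v u) (S : Finset V) (c : V) :
    #(Op A S c) + #(Im A S c) ≤ #S := by
  classical
  rw [Op_Im hopp]; exact card_filter_le _ _

open Classical in
theorem B1 (k l : ℕ) (C S : Finset V) (r : ℝ)
    (h : ∀ c ∈ C, (#(Op A S c) : ℝ) + #(Im A S c) ≤ r) :
    (#((F A k l).filter (fun φ => φ 0 ∈ C ∧ ∀ j, j ≠ 0 → φ j ∈ S)) : ℝ) ≤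
      #C * (L k l * r ^ (k + l)) := by
  have h1 : (F A k l).filter (fun φ => φ 0 ∈ C ∧ ∀ j, j ≠ 0 → φ j ∈ S) ⊆
      C.biUnion (fun c => (F A k l).filter (fun φ => φ 0 = c ∧ ∀ j, j ≠ 0 → φ j ∈ S)) := by
    intro φ hφ
    simp only [mem_filter, mem_biUnion] at hφ ⊢
    exact ⟨φ 0, hφ.2.1, hφ.1, rfl, hφ.2.2⟩
  have h2 := (card_le_card h1).trans card_biUnion_le
  have h3 : (#((F A k l).filter (fun φ => φ 0 ∈ C ∧ ∀ j, j ≠ 0 → φ j ∈ S)) : ℝ) ≤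
    ∑ c ∈ C, (#((F A k l).filter (fun φ => φ 0 = c ∧ ∀ j, j ≠ 0 → φ j ∈ S)) : ℝ) := by
    exact_mod_cast h2
  refine h3.trans ?_
  rw [← nsmul_eq_mul]
  refine sum_le_card_nsmul _ _ _ ?_
  intro c hc
  refine le_trans ?_ (amgm_le k l (#(Op A S c)) (#(Im A S c)) r (by positivity) (by positivity) (h c hc))
  have h4 := box (outL k l) (inL k l) (disj k l) (Op A S c) (Im A S c) (fun _ => c)
    ((F A k l).filter (fun φ => φ 0 = c ∧ ∀ j, j ≠ 0 → φ j ∈ S)) ?_ ?_ ?_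
  · rw [card_outL, card_inL] at h4
    exact_mod_cast h4
  · intro φ hφ j hj
    simp only [mem_filter, mem_F] at hφ
    rw [Op, mem_filter, ← hφ.2.1]
    exact ⟨hφ.2.2 j (leaf_ne (Or.inl hj)), emb_out hφ.1 hj⟩
  · intro φ hφ j hj
    simp only [mem_filter, mem_F] at hφ
    rw [Im, mem_filter, ← hφ.2.1]
    exact ⟨hφ.2.2 j (leaf_ne (Or.inr hj)), emb_in hφ.1 hj⟩
  · intro φ hφ j h1 h2
    simp only [mem_filter, mem_F] at hφ
    have : j = 0 := by
      by_contra h0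
      rcases mem_leaf k l j h0 with h | h
      exacts [h1 h, h2 h]
    rw [this, hφ.2.1]

open Classical in
/-- Bound for maps sending a given leaf into `X`. -/
theorem B2 (k l p q : ℕ) (hopp : ∀ u v, A u v → ¬ A v u) (X : Finset V) (r : ℝ)
    (h : ∀ x ∈ X, (#(Non A x) : ℝ) ≤ r) (z : Fin (k + l + 1)) (hz : z ≠ 0) (N : V → Finset V)
    (hN : ∀ φ, IsStarEmb k l A φ → φ 0 ∈ N (φ z))
    (hp : #((outL k l).erase z) = p) (hq : #((inL k l).erase z) = q) :
    (#((F A k l).filter (fun φ => φ z ∈ X)) : ℝ) ≤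
      ∑ x ∈ X, #(N x) * (L p q * r ^ (p + q)) := by
  have h1 : (F A k l).filter (fun φ => φ z ∈ X) ⊆
      X.biUnion (fun x => (N x).biUnion
        (fun c => (F A k l).filter (fun φ => φ 0 = c ∧ φ z = x))) := by
    intro φ hφ
    simp only [mem_filter, mem_biUnion] at hφ ⊢
    exact ⟨φ z, hφ.2, φ 0, hN φ ((mem_F A).1 hφ.1), hφ.1, rfl, rfl⟩
  have h2 := (card_le_card h1).trans card_biUnion_le
  have h3 : (#((F A k l).filter (fun φ => φ z ∈ X)) : ℝ) ≤
    ∑ x ∈ X, (#((N x).biUnion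
        (fun c => (F A k l).filter (fun φ => φ 0 = c ∧ φ z = x))) : ℝ) := by
    exact_mod_cast h2
  refine h3.trans (sum_le_sum ?_)
  intro x hx
  have h5 : (#((N x).biUnion
        (fun c => (F A k l).filter (fun φ => φ 0 = c ∧ φ z = x))) : ℝ) ≤
     ∑ c ∈ N x, (#((F A k l).filter (fun φ => φ 0 = c ∧ φ z = x)) : ℝ) := by
    exact_mod_cast card_biUnion_le
  refine h5.trans ?_
  rw [← nsmul_eq_mul]
  refine sum_le_card_nsmul _ _ _ ?_
  intro c hc
  have h6 : (#(Op A (Non A x) c) : ℝ) + #(Im A (Non A x) c) ≤ r := by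
    refine le_trans ?_ (h x hx)
    exact_mod_cast Op_Im_le hopp _ _
  refine le_trans ?_ (amgm_le p q (#(Op A (Non A x) c)) (#(Im A (Non A x) c)) r
    (by positivity) (by positivity) h6)
  have h4 := box ((outL k l).erase z) ((inL k l).erase z)
    ((disj k l).mono (erase_subset _ _) (erase_subset _ _))
    (Op A (Non A x) c) (Im A (Non A x) c) (fun j => if j = 0 then c else x)
    ((F A k l).filter (fun φ => φ 0 = c ∧ φ z = x)) ?_ ?_ ?_
  · rw [hp, hq] at h4
    exact_mod_cast h4
  · intro φ hφ j hj
    simp only [mem_filter, mem_F] at hφ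
    have hj := mem_of_mem_erase hj
    have hj0 := leaf_ne (Or.inl hj)
    rw [Op, mem_filter, ← hφ.2.1, Non, mem_filter, ← hφ.2.2]
    exact ⟨⟨mem_univ _, emb_non hφ.1 hz hj0, emb_non hφ.1 hj0 hz⟩, emb_out hφ.1 hj⟩
  · intro φ hφ j hj
    simp only [mem_filter, mem_F] at hφ
    have hj := mem_of_mem_erase hj
    have hj0 := leaf_ne (Or.inr hj)
    rw [Im, mem_filter, ← hφ.2.1, Non, mem_filter, ← hφ.2.2]
    exact ⟨⟨mem_univ _, emb_non hφ.1 hz hj0, emb_non hφ.1 hj0 hz⟩, emb_in hφ.1 hj⟩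
  · intro φ hφ j h1 h2
    simp only [mem_filter, mem_F] at hφ
    by_cases h0 : j = 0
    · simp [h0, hφ.2.1]
    · have : j = z := by
        by_contra hne
        rcases mem_leaf k l j h0 with h | h
        exacts [h1 (mem_erase.2 ⟨hne, h⟩), h2 (mem_erase.2 ⟨hne, h⟩)]
      simp [this, hz, hφ.2.2]

open Classical in
theorem B3 (k l : ℕ) (hlk : l ≤ k) (hopp : ∀ u v, A u v → ¬ A v u) (X : Finset V) (r : ℝ)
    (hr : 0 ≤ r) (h : ∀ x ∈ X, (#(Non A x) : ℝ) ≤ r) :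
    (#((F A (k+1) (l+1)).filter (fun φ => ∃ z, z ≠ 0 ∧ φ z ∈ X)) : ℝ) ≤
      #X * Fintype.card V * (lam1 (k+1) (l+1) * r ^ (k + l + 1)) := by
  have h1 : (F A (k+1) (l+1)).filter (fun φ => ∃ z, z ≠ 0 ∧ φ z ∈ X) ⊆
      (outL (k+1) (l+1)).biUnion (fun z => (F A (k+1) (l+1)).filter (fun φ => φ z ∈ X)) ∪
      (inL (k+1) (l+1)).biUnion (fun z => (F A (k+1) (l+1)).filter (fun φ => φ z ∈ X)) := by
    intro φ hφ
    simp only [mem_filter, mem_biUnion, mem_union] at hφ ⊢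
    obtain ⟨hF, z, hz, hzX⟩ := hφ
    rcases mem_leaf _ _ z hz with h | h
    · exact Or.inl ⟨z, h, hF, hzX⟩
    · exact Or.inr ⟨z, h, hF, hzX⟩
  have h2 := ((card_le_card h1).trans (card_union_le _ _)).trans
    (add_le_add card_biUnion_le card_biUnion_le)
  have h3 : (#((F A (k+1) (l+1)).filter (fun φ => ∃ z, z ≠ 0 ∧ φ z ∈ X)) : ℝ) ≤
    ∑ z ∈ outL (k+1) (l+1), (#((F A (k+1) (l+1)).filter (fun φ => φ z ∈ X)) : ℝ) +
    ∑ z ∈ inL (k+1) (l+1), (#((F A (k+1) (l+1)).filter (fun φ => φ z ∈ X)) : ℝ) := by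
    exact_mod_cast h2
  have h4 : ∑ z ∈ outL (k+1) (l+1), (#((F A (k+1) (l+1)).filter (fun φ => φ z ∈ X)) : ℝ) ≤
      #(outL (k+1) (l+1)) • ∑ x ∈ X, #(Im A univ x) * (L k (l+1) * r ^ (k + (l+1))) := by
    refine sum_le_card_nsmul _ _ _ ?_
    intro z hz
    refine B2 (k+1) (l+1) k (l+1) hopp X r h z (leaf_ne (Or.inl hz)) _ ?_ ?_ ?_
    · intro φ hφ
      simp only [Im, mem_filter, mem_univ, true_and]
      exact emb_out hφ hz
    · rw [card_erase_of_mem hz, card_outL]; rfl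
    · rw [erase_eq_of_notMem (Finset.disjoint_left.1 (disj _ _) hz), card_inL]
  have h5 : ∑ z ∈ inL (k+1) (l+1), (#((F A (k+1) (l+1)).filter (fun φ => φ z ∈ X)) : ℝ) ≤
      #(inL (k+1) (l+1)) • ∑ x ∈ X, #(Op A univ x) * (L (k+1) l * r ^ (k + 1 + l)) := by
    refine sum_le_card_nsmul _ _ _ ?_
    intro z hz
    refine B2 (k+1) (l+1) (k+1) l hopp X r h z (leaf_ne (Or.inr hz)) _ ?_ ?_ ?_
    · intro φ hφ
      simp only [Op, mem_filter, mem_univ, true_and]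
      exact emb_in hφ hz
    · rw [erase_eq_of_notMem (Finset.disjoint_right.1 (disj _ _) hz), card_outL]
    · rw [card_erase_of_mem hz, card_inL]; rfl
  rw [card_outL, nsmul_eq_mul, mul_sum] at h4
  rw [card_inL, nsmul_eq_mul, mul_sum] at h5
  refine (h3.trans (add_le_add h4 h5)).trans ?_
  rw [← sum_add_distrib, mul_assoc, ← nsmul_eq_mul]
  refine sum_le_card_nsmul _ _ _ ?_
  intro x hx
  have e1 : k + (l + 1) = k + l + 1 := by ring
  have e2 : k + 1 + l = k + l + 1 := by ring
  rw [e1, e2]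
  have hn : (#(Op A univ x) : ℝ) + #(Im A univ x) ≤ Fintype.card V := by
    exact_mod_cast Op_Im_le hopp univ x
  have hl1 := lam1_eq (k+1) l
  have hl2 := lam1_ge k l hlk
  have hpos : 0 ≤ lam1 (k+1) (l+1) := by
    rw [hl1]; exact mul_nonneg (by positivity) (L_nonneg _ _)
  have hrp : 0 ≤ r ^ (k + l + 1) := by positivity
  calc _ = (#(Im A univ x) : ℝ) * r ^ (k + l + 1) * (((k + 1 : ℕ) : ℝ) * L k (l+1))
        + (#(Op A univ x) : ℝ) * r ^ (k + l + 1) * (((l + 1 : ℕ) : ℝ) * L (k+1) l) := by ring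
    _ ≤ (#(Im A univ x) : ℝ) * r ^ (k + l + 1) * lam1 (k+1) (l+1)
        + (#(Op A univ x) : ℝ) * r ^ (k + l + 1) * lam1 (k+1) (l+1) := by
        rw [← hl1]; gcongr
    _ = ((#(Op A univ x) : ℝ) + #(Im A univ x)) * (lam1 (k+1) (l+1) * r ^ (k + l + 1)) := by ring
    _ ≤ _ := by gcongr

open Classical in
theorem sum_sCond (k l : ℕ) (z : Fin (k + l + 1)) :
    ∑ v, sCond k l A z v = (#(F A k l) : ℝ) / (Fintype.card V : ℝ) ^ (k + l) := by
  unfold sCond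
  rw [← sum_div]
  congr 1
  rw [← Nat.cast_sum]
  congr 1
  rw [card_eq_sum_card_fiberwise (f := fun φ => φ z) (t := univ) (fun _ _ => mem_univ _)]
  refine sum_congr rfl fun v _ => ?_
  rw [Nat.card_eq_fintype_card, Fintype.card_subtype]
  congr 1
  ext φ
  simp [F]

theorem avg (k l : ℕ) (hn : 1 ≤ Fintype.card V) :
    Smin k l A / ((k : ℝ) + l + 1) ≤ (#(F A k l) : ℝ) / (Fintype.card V : ℝ) ^ (k + l + 1) := by
  have hn' : (0 : ℝ) < Fintype.card V := by exact_mod_cast hn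
  have hk : (0 : ℝ) < (k : ℝ) + l + 1 := by positivity
  unfold Smin
  rw [mul_div_cancel_left₀ _ hk.ne']
  have h1 : ∀ v ∈ (univ : Finset V), sInf (Set.range (sVert k l A)) ≤ sVert k l A v := fun v _ =>
    csInf_le (Set.finite_range _).bddBelow ⟨v, rfl⟩
  have h2 := card_nsmul_le_sum _ _ _ h1
  have h3 : ∑ v, sVert k l A v = (#(F A k l) : ℝ) / (Fintype.card V : ℝ) ^ (k + l) := by
    unfold sVert
    rw [← sum_div, sum_add_distrib, sum_add_distrib, ← mul_sum, ← mul_sum, sum_sCond, sum_sCond,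
      sum_sCond]
    field_simp
    ring
  rw [h3, nsmul_eq_mul, card_univ] at h2
  rw [pow_succ, ← div_div, le_div_iff₀ hn']
  linarith

end
end Stmt12Aux

open Stmt12Aux Finset in
theorem stmt12 (k l : ℕ) (hl : 1 ≤ l) (hlk : l ≤ k) (hm : 6 ≤ k + l)
    (V : Type) [Fintype V] (A : V → V → Prop)
    (hirr : Irreflexive A) (hopp : ∀ u v, A u v → ¬ A v u) (hn : 1 ≤ Fintype.card V)
    (hX : (bigX A).Nonempty) (hY : (bigY A).Nonempty) :
    lam0 k l * alphaX A * (1 - alphaX A) ^ (k + l)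
        + lam1 k l * alphaX A * (1 - Dmin A) ^ (k + l - 1)
        + lam0 k l * (1 - alphaX A) * betaY A ^ (k + l)
      ≥ Smin k l A / ((k : ℝ) + l + 1) := by
  classical
  refine (avg k l hn).trans ?_
  have hn' : (0 : ℝ) < Fintype.card V := by exact_mod_cast hn
  set n : ℝ := (Fintype.card V : ℝ) with hndef
  set X : Finset V := univ.filter (· ∈ bigX A) with hXdef
  set Y : Finset V := univ.filter (· ∈ bigY A) with hYdef
  have hXY : (#X : ℝ) + #Y = n := by
    have : #X + #Y = Fintype.card V := by
      rw [hXdef, hYdef]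
      simp only [bigY, Set.mem_compl_iff]
      rw [card_filter_add_card_filter_not, card_univ]
    rw [hndef]; exact_mod_cast this
  have hα : alphaX A * n = #X := by
    rw [alphaX, muSet, div_mul_cancel₀ _ hn'.ne', Nat.card_eq_fintype_card, hXdef, Fintype.card_ofFinset]
  have hα' : (1 - alphaX A) * n = #Y := by rw [sub_mul, hα]; linarith
  have hD : ∀ x ∈ X, (#(Non A x) : ℝ) ≤ (1 - Dmin A) * n := by
    intro x hx
    have h1 : Dmin A ≤ rho A x :=
      csInf_le (Set.toFinite _).bddBelow ⟨x, by simpa [hXdef] using hx, rfl⟩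
    have h2 : rho A x * n = #(univ.filter fun u => A x u ∨ A u x) := by
      rw [rho, div_mul_cancel₀ _ hn'.ne', Nat.card_eq_fintype_card, Fintype.card_subtype]
    have h3 : #(univ.filter fun u => A x u ∨ A u x) + #(Non A x) = Fintype.card V := by
      rw [← card_univ, ← card_filter_add_card_filter_not (s := univ) (fun u => A x u ∨ A u x), Non]
      simp only [not_or]
    have h3' : (#(univ.filter fun u => A x u ∨ A u x) : ℝ) + #(Non A x) = n := by
      rw [hndef]; exact_mod_cast h3
    have := mul_le_mul_of_nonneg_right h1 hn'.le
    linarith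
  have hβ : ∀ y ∈ Y, (#(Op A Y y) : ℝ) + #(Im A Y y) ≤ betaY A * n := by
    intro y hy
    have h1 : rhoIn A (bigY A) y ≤ betaY A :=
      le_csSup (Set.toFinite _).bddAbove ⟨y, by simpa [hYdef] using hy, rfl⟩
    have h2 : rhoIn A (bigY A) y * n = ((#(Op A Y y) + #(Im A Y y) : ℕ) : ℝ) := by
      rw [rhoIn, div_mul_cancel₀ _ hn'.ne', Nat.card_eq_fintype_card, Fintype.card_subtype,
        Op_Im hopp, hYdef, filter_filter]
      congr 2
      ext u
      simp only [mem_filter, mem_univ, true_and]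
      tauto
    push_cast at h2
    rw [← h2]
    exact mul_le_mul_of_nonneg_right h1 hn'.le
  have hD0 : 0 ≤ (1 - Dmin A) * n := by
    obtain ⟨x, hx⟩ := hX
    exact le_trans (by positivity) (hD x (by simpa [hXdef] using hx))
  have hF : F A k l ⊆ (F A k l).filter (fun φ => φ 0 ∈ X ∧ ∀ j, j ≠ 0 → φ j ∈ Y) ∪
      (F A k l).filter (fun φ => φ 0 ∈ Y ∧ ∀ j, j ≠ 0 → φ j ∈ Y) ∪
      (F A k l).filter (fun φ => ∃ z, z ≠ 0 ∧ φ z ∈ X) := by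
    intro φ hφ
    have hc : ∀ v, v ∈ X ∨ v ∈ Y := by
      intro v; simp only [hXdef, hYdef, mem_filter, mem_univ, true_and, bigY, Set.mem_compl_iff]
      exact em _
    simp only [mem_union, mem_filter]
    by_cases h : ∃ z, z ≠ 0 ∧ φ z ∈ X
    · exact Or.inr ⟨hφ, h⟩
    · push Not at h
      have h' : ∀ j, j ≠ 0 → φ j ∈ Y := fun j hj => (hc _).resolve_left (h j hj)
      rcases hc (φ 0) with h0 | h0
      · exact Or.inl (Or.inl ⟨hφ, h0, h'⟩)
      · exact Or.inl (Or.inr ⟨hφ, h0, h'⟩)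
  have hF2 := (card_le_card hF).trans ((card_union_le _ _).trans
    (Nat.add_le_add_right (card_union_le _ _) _))
  have hF3 : (#(F A k l) : ℝ) ≤ #((F A k l).filter (fun φ => φ 0 ∈ X ∧ ∀ j, j ≠ 0 → φ j ∈ Y)) +
      #((F A k l).filter (fun φ => φ 0 ∈ Y ∧ ∀ j, j ≠ 0 → φ j ∈ Y)) +
      #((F A k l).filter (fun φ => ∃ z, z ≠ 0 ∧ φ z ∈ X)) := by exact_mod_cast hF2
  have b1 := B1 (A := A) k l X Y (#Y) (fun c _ => by exact_mod_cast Op_Im_le hopp Y c)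
  have b2 := B1 (A := A) k l Y Y (betaY A * n) hβ
  obtain ⟨k, rfl⟩ : ∃ k', k = k' + 1 := ⟨k - 1, by omega⟩
  obtain ⟨l, rfl⟩ : ∃ l', l = l' + 1 := ⟨l - 1, by omega⟩
  have b3 := B3 (A := A) k l (by omega) hopp X _ hD0 hD
  rw [← hα'] at b1 b2
  rw [← hα] at b1 b3
  rw [div_le_iff₀ (by positivity), lam0_eq]
  refine (hF3.trans (add_le_add (add_le_add b1 b2) b3)).trans (le_of_eq ?_)
  rw [show k + 1 + (l + 1) - 1 = k + l + 1 by omega, show k + 1 + (l + 1) = k + l + 2 by ring, ← hndef]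
  simp only [mul_pow]
  ring
end

section
/- Suppose s(v) ≥ OPT(k,l) for every vertex v of G. Then α ≤ 1/m, where α = μ(X) is the proportion of vertices v of G with ρ(v) ≥ 1/2. -/
open scoped BigOperators

lemma aux_amgm (a b : ℕ) (p q : ℝ) (hp : 0 ≤ p) (hq : 0 ≤ q) :
    p ^ a * q ^ b * ((a : ℝ) + b) ^ (a + b) ≤ (a : ℝ) ^ a * (b : ℝ) ^ b * (p + q) ^ (a + b) := by
  rcases Nat.eq_zero_or_pos a with ha | ha
  · subst ha
    simp only [pow_zero, Nat.cast_zero, zero_add, one_mul]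
    rw [mul_comm]
    gcongr
    linarith
  rcases Nat.eq_zero_or_pos b with hb | hb
  · subst hb
    simp only [pow_zero, Nat.cast_zero, add_zero, mul_one]
    rw [mul_comm]
    gcongr
    linarith
  have ha' : (0 : ℝ) < a := by exact_mod_cast ha
  have hb' : (0 : ℝ) < b := by exact_mod_cast hb
  have hs : (0 : ℝ) < (a : ℝ) + b := by positivity
  have h := Real.geom_mean_le_arith_mean2_weighted (w₁ := a / ((a : ℝ) + b)) (w₂ := b / ((a : ℝ) + b))
    (p₁ := p / a) (p₂ := q / b) (by positivity) (by positivity) (by positivity) (by positivity)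
    (by field_simp)
  have h2 := pow_le_pow_left₀ (by positivity) h (a + b)
  rw [mul_pow, ← Real.rpow_mul_natCast (by positivity), ← Real.rpow_mul_natCast (by positivity)] at h2
  have e1 : (a / ((a : ℝ) + b)) * ((a + b : ℕ) : ℝ) = (a : ℕ) := by push_cast; field_simp
  have e2 : (b / ((a : ℝ) + b)) * ((a + b : ℕ) : ℝ) = (b : ℕ) := by push_cast; field_simp
  have e3 : a / ((a : ℝ) + b) * (p / a) + b / ((a : ℝ) + b) * (q / b) = (p + q) / ((a : ℝ) + b) := by
    field_simp
  rw [e1, e2, e3, Real.rpow_natCast, Real.rpow_natCast, div_pow, div_pow, div_pow, div_mul_div_comm,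
    div_le_div_iff₀ (by positivity) (by positivity)] at h2
  linarith

lemma aux_amgm' (a b : ℕ) (ha : 1 ≤ a) (hb : 1 ≤ b) (p q r : ℝ) (hp : 0 ≤ p) (hq : 0 ≤ q) (hr : p + q ≤ r) :
    p ^ a * q ^ b ≤ (a : ℝ) ^ a * (b : ℝ) ^ b / ((a : ℝ) + b) ^ (a + b) * r ^ (a + b) := by
  have h := aux_amgm a b p q hp hq
  have hs : (0 : ℝ) < (a : ℝ) + b := by positivity
  have : (a : ℝ) ^ a * (b : ℝ) ^ b * (p + q) ^ (a + b) ≤ (a : ℝ) ^ a * (b : ℝ) ^ b * r ^ (a + b) := by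
    gcongr
  rw [div_mul_eq_mul_div, le_div_iff₀ (by positivity)]
  linarith

lemma aux_amgm1 (a b : ℕ) (ha : 1 ≤ a) (hb : 1 ≤ b) (p q r : ℝ) (hp : 0 ≤ p) (hq : 0 ≤ q) (hr : p + q ≤ r) :
    a * (p ^ (a - 1) * q ^ b) ≤
      (a : ℝ) ^ a * (b : ℝ) ^ b / ((a : ℝ) + b - 1) ^ (a + b - 1) * r ^ (a + b - 1) := by
  obtain ⟨a, rfl⟩ : ∃ c, a = c + 1 := ⟨a - 1, by omega⟩
  have h := aux_amgm a b p q hp hq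
  have e : a + 1 + b - 1 = a + b := by omega
  have e' : ((a + 1 : ℕ) : ℝ) + b - 1 = (a : ℝ) + b := by push_cast; ring
  have hb' : (1 : ℝ) ≤ b := by exact_mod_cast hb
  have hs : (0 : ℝ) < (a : ℝ) + b := by positivity
  rw [e, e', Nat.add_sub_cancel, div_mul_eq_mul_div, le_div_iff₀ (by positivity)]
  have h1 : (a : ℝ) ^ a ≤ ((a + 1 : ℕ) : ℝ) ^ a := by gcongr; simp
  calc _ = ((a + 1 : ℕ) : ℝ) * (p ^ a * q ^ b * ((a : ℝ) + b) ^ (a + b)) := by ring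
    _ ≤ ((a + 1 : ℕ) : ℝ) * ((a : ℝ) ^ a * (b : ℝ) ^ b * (p + q) ^ (a + b)) := by gcongr
    _ ≤ ((a + 1 : ℕ) : ℝ) * (((a + 1 : ℕ) : ℝ) ^ a * (b : ℝ) ^ b * r ^ (a + b)) := by gcongr
    _ = _ := by ring

lemma aux_exp_pow (n : ℕ) (hn : 1 ≤ n) : (1 + 1 / (n : ℝ)) ^ n ≤ 2.7182818286 := by
  have h0 : (0 : ℝ) < n := by exact_mod_cast hn
  have h := Real.add_one_le_exp (1 / (n : ℝ))
  have h2 := pow_le_pow_left₀ (by positivity) h n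
  rw [← Real.exp_nat_mul, mul_one_div_cancel h0.ne'] at h2
  rw [add_comm]
  exact h2.trans Real.exp_one_lt_d9.le

/-- `c ≤ e m`, where `c = m^m/(m-1)^(m-1)`. -/
lemma aux_c (m : ℕ) (hm : 6 ≤ m) :
    (m : ℝ) ^ m / ((m : ℝ) - 1) ^ (m - 1) ≤ 2.7182818286 * m := by
  obtain ⟨j, rfl⟩ : ∃ j, m = j + 1 := ⟨m - 1, by omega⟩
  have h := aux_exp_pow j (by omega)
  have h0 : (0 : ℝ) < j := by exact_mod_cast (show 0 < j by omega)
  have : ((j + 1 : ℕ) : ℝ) ^ (j + 1) / (((j + 1 : ℕ) : ℝ) - 1) ^ (j + 1 - 1)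
      = (1 + 1 / (j : ℝ)) ^ j * ((j + 1 : ℕ) : ℝ) := by
    have : 1 + 1 / (j : ℝ) = ((j : ℝ) + 1) / j := by field_simp
    rw [this, div_pow]; push_cast
    rw [add_sub_cancel_right, pow_succ]; field_simp
  rw [this]
  gcongr

lemma aux_S (m : ℕ) (hm : 6 ≤ m) : 0.3678 ≤ ((m : ℝ) / ((m : ℝ) + 1)) ^ m := by
  have h := aux_exp_pow m (by omega)
  have h0 : (0 : ℝ) < m := by exact_mod_cast (show 0 < m by omega)
  have : (m : ℝ) / ((m : ℝ) + 1) = (1 + 1 / (m : ℝ))⁻¹ := by field_simp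
  rw [this, inv_pow]
  rw [le_inv_comm₀ (by norm_num) (by positivity)]
  exact h.trans (by norm_num)

lemma aux_dec1 (m : ℕ) (hm : 7 ≤ m) : (m : ℝ) * (1 / 2) ^ m ≤ 7 / 128 := by
  induction m, hm using Nat.le_induction with
  | base => norm_num
  | succ j hj ih =>
    have : (7 : ℝ) ≤ j := by exact_mod_cast hj
    have hp : (0 : ℝ) < (1 / 2 : ℝ) ^ j := by positivity
    push_cast
    rw [pow_succ]
    nlinarith

lemma aux_dec2 (m : ℕ) (hm : 7 ≤ m) :
    (m : ℝ) * (m + 1) * (7 / 25) ^ (m - 1) ≤ 56 * (7 / 25) ^ 6 := by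
  induction m, hm using Nat.le_induction with
  | base => norm_num
  | succ j hj ih =>
    obtain ⟨i, rfl⟩ : ∃ i, j = i + 1 := ⟨j - 1, by omega⟩
    have : (6 : ℝ) ≤ i := by
      have : 6 ≤ i := by omega
      exact_mod_cast this
    have hp : (0 : ℝ) < (7 / 25 : ℝ) ^ i := by positivity
    refine le_trans ?_ ih
    simp only [Nat.add_sub_cancel]
    push_cast
    rw [pow_succ]
    have : ((i : ℝ) + 1 + 1) * (i + 1 + 1 + 1) * (7 / 25) ≤ ((i : ℝ) + 1) * (i + 1 + 1) := by nlinarith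
    nlinarith

lemma aux_N1 (m : ℕ) (hm : 6 ≤ m) (r : ℝ) (h1 : 1 / 2 ≤ r) (h2 : r ≤ 18 / 25) :
    r ^ m + (m : ℝ) ^ m / ((m : ℝ) - 1) ^ (m - 1) * (r * (1 - r) ^ (m - 1))
      < ((m : ℝ) / ((m : ℝ) + 1)) ^ m := by
  have hm1 : (0 : ℝ) < (m : ℝ) - 1 := by
    have : (6 : ℝ) ≤ m := by exact_mod_cast hm
    linarith
  have hA : r ^ m ≤ (18 / 25) ^ m := by gcongr
  have hB : r * (1 - r) ^ (m - 1) ≤ (1 / 2) ^ m := by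
    obtain ⟨j, rfl⟩ : ∃ j, m = j + 2 := ⟨m - 2, by omega⟩
    have e : j + 2 - 1 = j + 1 := by omega
    rw [e, pow_succ, pow_add]
    have a1 : (1 - r) ^ j ≤ (1 / 2 : ℝ) ^ j := pow_le_pow_left₀ (by linarith) (by linarith) j
    have a2 : r * (1 - r) ≤ (1 / 2) ^ 2 := by nlinarith [sq_nonneg (r - 1 / 2)]
    calc r * ((1 - r) ^ j * (1 - r)) = (1 - r) ^ j * (r * (1 - r)) := by ring
      _ ≤ _ := mul_le_mul a1 a2 (mul_nonneg (by linarith) (by linarith)) (by positivity)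
  have hC : (m : ℝ) ^ m / ((m : ℝ) - 1) ^ (m - 1) * (r * (1 - r) ^ (m - 1))
      ≤ (m : ℝ) ^ m / ((m : ℝ) - 1) ^ (m - 1) * (1 / 2) ^ m := by gcongr
  rcases Nat.lt_or_ge m 7 with h7 | h7
  · have : m = 6 := by omega
    subst this
    norm_num at *
    linarith
  · have h18 : (18 / 25 : ℝ) ^ m ≤ (18 / 25 : ℝ) ^ 7 :=
      pow_le_pow_of_le_one (by norm_num) (by norm_num) h7
    have hD : (m : ℝ) ^ m / ((m : ℝ) - 1) ^ (m - 1) * (1 / 2) ^ m ≤ 2.7182818286 * m * (1 / 2) ^ m := by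
      gcongr
      exact aux_c m hm
    have hE := aux_dec1 m h7
    have hS := aux_S m hm
    have h18' : (18 / 25 : ℝ) ^ 7 ≤ 0.1004 := by norm_num
    have hF : 2.7182818286 * (m : ℝ) * (1 / 2) ^ m ≤ 2.7182818286 * (7 / 128) := by
      rw [mul_assoc]; gcongr
    have hG : (2.7182818286 : ℝ) * (7 / 128) ≤ 0.15 := by norm_num
    have hH : (0.1004 : ℝ) + 0.15 < 0.3678 := by norm_num
    linarith

lemma aux_N2 (m : ℕ) (hm : 6 ≤ m) :
    (1 - 1 / (m : ℝ)) ^ m + 2 * ((m : ℝ) ^ m / ((m : ℝ) - 1) ^ (m - 1) * (7 / 25) ^ (m - 1))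
      < ((m : ℝ) / ((m : ℝ) + 1)) ^ m := by
  rcases Nat.lt_or_ge m 7 with h7 | h7
  · have : m = 6 := by omega
    subst this
    norm_num
  have hm6 : (7 : ℝ) ≤ m := by exact_mod_cast h7
  have hS := aux_S m hm
  set S := ((m : ℝ) / ((m : ℝ) + 1)) ^ m with hSdef
  have hbern : 1 + (m : ℝ) * (1 / ((m : ℝ) ^ 2 - 1)) ≤ (1 + 1 / ((m : ℝ) ^ 2 - 1)) ^ m := by
    apply one_add_mul_le_pow
    have : 0 ≤ 1 / ((m : ℝ) ^ 2 - 1) := by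
      apply div_nonneg <;> nlinarith
    linarith
  have hprod : (1 - 1 / (m : ℝ)) ^ m * (1 + 1 / ((m : ℝ) ^ 2 - 1)) ^ m = S := by
    rw [hSdef, ← mul_pow]
    congr 1
    have h1 : (m : ℝ) ^ 2 - 1 ≠ 0 := by nlinarith
    have h1' : (m : ℝ) ^ 2 - 1 = ((m : ℝ) - 1) * (m + 1) := by ring
    have h2 : (m : ℝ) - 1 ≠ 0 := by linarith
    rw [h1']
    field_simp
    ring
  have hT0 : 0 ≤ (1 - 1 / (m : ℝ)) ^ m := by
    apply pow_nonneg
    rw [sub_nonneg, div_le_one (by linarith)]; linarith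
  set T := (1 - 1 / (m : ℝ)) ^ m
  have hq : 1 / (m : ℝ) ≤ (m : ℝ) * (1 / ((m : ℝ) ^ 2 - 1)) := by
    rw [mul_one_div, div_le_div_iff₀ (by linarith) (by nlinarith)]
    nlinarith
  have hTS : T * (m + 1) ≤ S * m := by
    have : T * (1 + 1 / (m : ℝ)) ≤ S := by
      rw [← hprod]; gcongr; linarith
    have h3 : T * (1 + 1 / (m : ℝ)) * m = T * (m + 1) := by field_simp
    nlinarith
  have hc := aux_c m hm
  have hd := aux_dec2 m h7
  set c := (m : ℝ) ^ m / ((m : ℝ) - 1) ^ (m - 1)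
  have hcq : c * (7 / 25) ^ (m - 1) * (m + 1) ≤ 2.7182818286 * (56 * (7 / 25) ^ 6) := by
    calc _ ≤ (2.7182818286 * (m : ℝ)) * (7 / 25) ^ (m - 1) * (m + 1) := by gcongr
      _ = 2.7182818286 * ((m : ℝ) * (m + 1) * (7 / 25) ^ (m - 1)) := by ring
      _ ≤ _ := by gcongr
  have hfin : (T + 2 * (c * (7 / 25) ^ (m - 1))) * (m + 1) < S * (m + 1) := by
    norm_num at *
    nlinarith
  exact lt_of_mul_lt_mul_right hfin (by linarith)

section Comb
open Classical Finset

noncomputable def embF (k l : ℕ) {V : Type} [Fintype V] (A : V → V → Prop) :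
    Finset (Fin (k + l + 1) → V) := univ.filter (fun φ => IsStarEmb k l A φ)
noncomputable def nbP {V : Type} [Fintype V] (A : V → V → Prop) (u : V) : Finset V :=
  univ.filter (fun x => A u x)
noncomputable def nbM {V : Type} [Fintype V] (A : V → V → Prop) (u : V) : Finset V :=
  univ.filter (fun x => A x u)
noncomputable def nbA {V : Type} [Fintype V] (A : V → V → Prop) (u : V) : Finset V :=
  univ.filter (fun x => A u x ∨ A x u)

lemma emb_out {k l : ℕ} {V : Type} {A : V → V → Prop} {φ : Fin (k + l + 1) → V}
    (h : IsStarEmb k l A φ) (a : Fin (k + l + 1)) (h0 : a ≠ 0) (hk : a.val ≤ k) : A (φ 0) (φ a) := by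
  refine (h.2 0 a).1 (Or.inl ⟨rfl, ?_, hk⟩)
  have : a.val ≠ 0 := fun e => h0 (Fin.ext e)
  omega

lemma emb_in {k l : ℕ} {V : Type} {A : V → V → Prop} {φ : Fin (k + l + 1) → V}
    (h : IsStarEmb k l A φ) (a : Fin (k + l + 1)) (hk : ¬ a.val ≤ k) : A (φ a) (φ 0) :=
  (h.2 a 0).1 (Or.inr ⟨rfl, by omega⟩)

lemma emb_non {k l : ℕ} {V : Type} {A : V → V → Prop} {φ : Fin (k + l + 1) → V}
    (h : IsStarEmb k l A φ) (a b : Fin (k + l + 1)) (ha : a ≠ 0) (hb : b ≠ 0) : ¬ A (φ a) (φ b) := by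
  intro hA
  have ha' : a.val ≠ 0 := fun e => ha (Fin.ext e)
  have hb' : b.val ≠ 0 := fun e => hb (Fin.ext e)
  rcases (h.2 a b).2 hA with h | h
  · exact ha' h.1
  · exact hb' h.1

def outLeaves (k l : ℕ) : Finset (Fin (k + l + 1)) := univ.filter (fun a => a ≠ 0 ∧ a.val ≤ k)
def inLeaves (k l : ℕ) : Finset (Fin (k + l + 1)) := univ.filter (fun a => a ≠ 0 ∧ ¬ a.val ≤ k)

lemma card_outLeaves (k l : ℕ) : (outLeaves k l).card = k := by
  have : (outLeaves k l).card = (Finset.Icc 1 k).card := by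
    refine Finset.card_bij (fun a _ => a.val) ?_ ?_ ?_
    · intro a ha
      simp only [outLeaves, mem_filter, mem_univ, true_and, Finset.mem_Icc] at *
      have : a.val ≠ 0 := fun e => ha.1 (Fin.ext e)
      omega
    · intro a _ b _ h
      exact Fin.ext h
    · intro b hb
      simp only [Finset.mem_Icc] at hb
      refine ⟨⟨b, by omega⟩, ?_, rfl⟩
      simp only [outLeaves, mem_filter, mem_univ, true_and]
      refine ⟨fun e => ?_, hb.2⟩
      have := congrArg Fin.val e
      simp at this
      omega
  rw [this]; simp

lemma card_inLeaves (k l : ℕ) : (inLeaves k l).card = l := by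
  have : (inLeaves k l).card = (Finset.Icc (k + 1) (k + l)).card := by
    refine Finset.card_bij (fun a _ => a.val) ?_ ?_ ?_
    · intro a ha
      simp only [inLeaves, mem_filter, mem_univ, true_and, Finset.mem_Icc] at *
      have := a.isLt
      omega
    · intro a _ b _ h
      exact Fin.ext h
    · intro b hb
      simp only [Finset.mem_Icc] at hb
      refine ⟨⟨b, by omega⟩, ?_, rfl⟩
      simp only [inLeaves, mem_filter, mem_univ, true_and]
      refine ⟨fun e => ?_, by omega⟩
      have := congrArg Fin.val e
      simp at this
      omega
  rw [this]; simp

lemma prod_star (k l : ℕ) (s : Finset (Fin (k + l + 1))) (P Q : ℕ) :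
    (∏ a ∈ s, if a = 0 then 1 else if a.val ≤ k then P else Q)
      = P ^ (s ∩ outLeaves k l).card * Q ^ (s ∩ inLeaves k l).card := by
  rw [Finset.prod_ite, Finset.prod_ite, Finset.prod_const_one, one_mul, Finset.prod_const,
    Finset.prod_const]
  congr 3 <;> · ext a; simp [outLeaves, inLeaves, and_assoc]

lemma countA {k l : ℕ} {V : Type} [Fintype V] (A : V → V → Prop) (v : V) (B : Finset V) :
    ((embF k l A).filter (fun φ => φ 0 = v ∧ ∀ a, a ≠ 0 → φ a ∈ B)).card
      ≤ (nbP A v ∩ B).card ^ k * (nbM A v ∩ B).card ^ l := by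
  have h1 : (embF k l A).filter (fun φ => φ 0 = v ∧ ∀ a, a ≠ 0 → φ a ∈ B) ⊆
      Fintype.piFinset (fun a : Fin (k + l + 1) => if a = 0 then {v} else
        if a.val ≤ k then nbP A v ∩ B else nbM A v ∩ B) := by
    intro φ hφ
    simp only [embF, mem_filter, mem_univ, true_and] at hφ
    obtain ⟨he, h0, hB⟩ := hφ
    rw [Fintype.mem_piFinset]
    intro a
    by_cases ha : a = 0
    · subst ha; simp [h0]
    · by_cases hk : a.val ≤ k
      · have := emb_out he a ha hk
        rw [h0] at this
        simp [ha, hk, nbP, this, hB a ha]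
      · have := emb_in he a hk
        rw [h0] at this
        simp [ha, hk, nbM, this, hB a ha]
  refine (Finset.card_le_card h1).trans (le_of_eq ?_)
  rw [Fintype.card_piFinset]
  have h2 : ∀ a : Fin (k + l + 1), (if a = 0 then {v} else
        if a.val ≤ k then nbP A v ∩ B else nbM A v ∩ B).card =
        if a = 0 then 1 else if a.val ≤ k then (nbP A v ∩ B).card else (nbM A v ∩ B).card := by
    intro a; split_ifs <;> simp
  rw [Finset.prod_congr rfl (fun a _ => h2 a), prod_star, univ_inter, univ_inter, card_outLeaves,
    card_inLeaves]

lemma countB {k l : ℕ} {V : Type} [Fintype V] (A : V → V → Prop) (u w : V) (z : Fin (k + l + 1))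
    (hz : z ≠ 0) :
    ((embF k l A).filter (fun φ => φ 0 = u ∧ φ z = w)).card
      ≤ (nbP A u \ nbA A w).card ^ (univ.erase z ∩ outLeaves k l).card
        * (nbM A u \ nbA A w).card ^ (univ.erase z ∩ inLeaves k l).card := by
  have h1 : (embF k l A).filter (fun φ => φ 0 = u ∧ φ z = w) ⊆
      Fintype.piFinset (fun a : Fin (k + l + 1) => if a = z then {w} else if a = 0 then {u} else
        if a.val ≤ k then nbP A u \ nbA A w else nbM A u \ nbA A w) := by
    intro φ hφ
    simp only [embF, mem_filter, mem_univ, true_and] at hφ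
    obtain ⟨he, h0, hB⟩ := hφ
    rw [Fintype.mem_piFinset]
    intro a
    by_cases haz : a = z
    · subst haz; simp [hB]
    by_cases ha : a = 0
    · subst ha; simp [h0, haz]
    · have hn1 := emb_non he a z ha hz
      have hn2 := emb_non he z a hz ha
      rw [hB] at hn1 hn2
      by_cases hk : a.val ≤ k
      · have := emb_out he a ha hk
        rw [h0] at this
        simp [ha, hk, haz, nbP, nbA, this, hn1, hn2]
      · have := emb_in he a hk
        rw [h0] at this
        simp [ha, hk, haz, nbM, nbA, this, hn1, hn2]
  refine (Finset.card_le_card h1).trans (le_of_eq ?_)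
  rw [Fintype.card_piFinset, ← Finset.mul_prod_erase _ _ (mem_univ z)]
  have h2 : ∀ a ∈ univ.erase z, (if a = z then {w} else if a = 0 then {u} else
        if a.val ≤ k then nbP A u \ nbA A w else nbM A u \ nbA A w).card =
        if a = 0 then 1 else if a.val ≤ k then (nbP A u \ nbA A w).card
          else (nbM A u \ nbA A w).card := by
    intro a ha
    rw [if_neg (Finset.ne_of_mem_erase ha)]
    split_ifs <;> simp
  rw [Finset.prod_congr rfl h2, prod_star]
  simp

lemma erase_out {k l : ℕ} (z : Fin (k + l + 1)) (hz : z ∈ outLeaves k l) :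
    (univ.erase z ∩ outLeaves k l).card = k - 1 ∧ (univ.erase z ∩ inLeaves k l).card = l := by
  constructor
  · rw [Finset.erase_inter, univ_inter, Finset.card_erase_of_mem hz, card_outLeaves]
  · rw [Finset.erase_inter, univ_inter, Finset.erase_eq_of_notMem, card_inLeaves]
    simp only [outLeaves, inLeaves, mem_filter, mem_univ, true_and] at *
    tauto

lemma erase_in {k l : ℕ} (z : Fin (k + l + 1)) (hz : z ∈ inLeaves k l) :
    (univ.erase z ∩ outLeaves k l).card = k ∧ (univ.erase z ∩ inLeaves k l).card = l - 1 := by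
  constructor
  · rw [Finset.erase_inter, univ_inter, Finset.erase_eq_of_notMem, card_outLeaves]
    simp only [outLeaves, inLeaves, mem_filter, mem_univ, true_and] at *
    tauto
  · rw [Finset.erase_inter, univ_inter, Finset.card_erase_of_mem hz, card_inLeaves]

lemma card_PM {V : Type} [Fintype V] (A : V → V → Prop) (hopp : ∀ u v, A u v → ¬ A v u)
    (u : V) (B : Finset V) :
    (nbP A u ∩ B).card + (nbM A u ∩ B).card ≤ B.card := by
  rw [← Finset.card_union_of_disjoint]
  · apply Finset.card_le_card
    intro x; simp; tauto
  · rw [Finset.disjoint_left]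
    intro x hx hy
    simp [nbP, nbM] at hx hy
    exact hopp _ _ hx.1 hy.1

lemma card_PM' {V : Type} [Fintype V] (A : V → V → Prop) (hopp : ∀ u v, A u v → ¬ A v u) (u : V) :
    (nbP A u).card + (nbM A u).card = (nbA A u).card := by
  rw [← Finset.card_union_of_disjoint]
  · congr 1
    ext x; simp [nbP, nbM, nbA]
  · rw [Finset.disjoint_left]
    intro x hx hy
    simp [nbP, nbM] at hx hy
    exact hopp _ _ hx hy

/-- The constant `k^k l^l/(m-1)^(m-1)`. -/
noncomputable def LamC (k l : ℕ) : ℝ :=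
  (k : ℝ) ^ k * (l : ℝ) ^ l / ((k : ℝ) + l - 1) ^ (k + l - 1)

/-- number of non-neighbours -/
noncomputable def nonN {V : Type} [Fintype V] (A : V → V → Prop) (w : V) : ℝ :=
  (Fintype.card V : ℝ) - (nbA A w).card

lemma PM_nonN {V : Type} [Fintype V] (A : V → V → Prop) (hopp : ∀ u v, A u v → ¬ A v u) (u w : V) :
    ((nbP A u \ nbA A w).card : ℝ) + (nbM A u \ nbA A w).card ≤ nonN A w := by
  have h := card_PM A hopp u (nbA A w)ᶜ
  rw [← Finset.sdiff_eq_inter_compl, ← Finset.sdiff_eq_inter_compl] at h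
  have h2 := Finset.card_compl_add_card (nbA A w)
  unfold nonN
  rw [← h2]
  push_cast
  have : (((nbP A u \ nbA A w).card + (nbM A u \ nbA A w).card : ℕ) : ℝ) ≤ ((nbA A w)ᶜ.card : ℕ) := by
    exact_mod_cast h
  push_cast at this
  linarith

lemma countOut {k l : ℕ} (hk : 1 ≤ k) (hl : 1 ≤ l) {V : Type} [Fintype V] (A : V → V → Prop)
    (hopp : ∀ u v, A u v → ¬ A v u) (u w : V) (z : Fin (k + l + 1)) (hz : z ∈ outLeaves k l) :
    (k : ℝ) * ((embF k l A).filter (fun φ => φ 0 = u ∧ φ z = w)).card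
      ≤ if A u w then LamC k l * nonN A w ^ (k + l - 1) else 0 := by
  have hz' := hz
  simp only [outLeaves, mem_filter, mem_univ, true_and] at hz'
  split_ifs with hA
  · have h := countB A u w z hz'.1
    rw [(erase_out z hz).1, (erase_out z hz).2] at h
    have h2 := aux_amgm1 k l hk hl _ _ _ (Nat.cast_nonneg _) (Nat.cast_nonneg _) (PM_nonN A hopp u w)
    refine le_trans ?_ h2
    gcongr
    exact_mod_cast h
  · have : (embF k l A).filter (fun φ => φ 0 = u ∧ φ z = w) = ∅ := by
      rw [Finset.filter_eq_empty_iff]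
      rintro φ hφ ⟨h0, h1⟩
      simp only [embF, mem_filter, mem_univ, true_and] at hφ
      have := emb_out hφ z hz'.1 hz'.2
      rw [h0, h1] at this
      exact hA this
    simp [this]

lemma countIn {k l : ℕ} (hk : 1 ≤ k) (hl : 1 ≤ l) {V : Type} [Fintype V] (A : V → V → Prop)
    (hopp : ∀ u v, A u v → ¬ A v u) (u w : V) (z : Fin (k + l + 1)) (hz : z ∈ inLeaves k l) :
    (l : ℝ) * ((embF k l A).filter (fun φ => φ 0 = u ∧ φ z = w)).card
      ≤ if A w u then LamC k l * nonN A w ^ (k + l - 1) else 0 := by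
  have hz' := hz
  simp only [inLeaves, mem_filter, mem_univ, true_and] at hz'
  split_ifs with hA
  · have h := countB A u w z hz'.1
    rw [(erase_in z hz).1, (erase_in z hz).2] at h
    have h2 := aux_amgm1 l k hl hk _ _ _ (Nat.cast_nonneg _) (Nat.cast_nonneg _)
      ((add_comm _ _).trans_le (PM_nonN A hopp u w))
    rw [add_comm l k, add_comm (l : ℝ) k, mul_comm ((l : ℝ) ^ l)] at h2
    refine le_trans ?_ h2
    gcongr
    rw [mul_comm]
    exact_mod_cast h
  · have : (embF k l A).filter (fun φ => φ 0 = u ∧ φ z = w) = ∅ := by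
      rw [Finset.filter_eq_empty_iff]
      rintro φ hφ ⟨h0, h1⟩
      simp only [embF, mem_filter, mem_univ, true_and] at hφ
      have := emb_in hφ z hz'.2
      rw [h0, h1] at this
      exact hA this
    simp [this]

lemma sum_center {k l : ℕ} {V : Type} [Fintype V] (A : V → V → Prop) (w : V) (z : Fin (k + l + 1)) :
    (((embF k l A).filter (fun φ => φ z = w)).card : ℝ)
      = ∑ u, (((embF k l A).filter (fun φ => φ 0 = u ∧ φ z = w)).card : ℝ) := by
  rw [Finset.card_eq_sum_card_fiberwise (f := fun φ => φ 0) (t := univ) (by intro x _; simp)]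
  push_cast
  refine Finset.sum_congr rfl (fun u _ => ?_)
  rw [Finset.filter_filter]
  congr 2
  ext φ; simp [and_comm]

lemma leafOut {k l : ℕ} (hk : 1 ≤ k) (hl : 1 ≤ l) {V : Type} [Fintype V] (A : V → V → Prop)
    (hopp : ∀ u v, A u v → ¬ A v u) (w : V) (z : Fin (k + l + 1)) (hz : z ∈ outLeaves k l) :
    (k : ℝ) * ((embF k l A).filter (fun φ => φ z = w)).card
      ≤ (nbM A w).card * (LamC k l * nonN A w ^ (k + l - 1)) := by
  rw [sum_center, Finset.mul_sum]
  refine (Finset.sum_le_sum (fun u _ => countOut hk hl A hopp u w z hz)).trans (le_of_eq ?_)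
  rw [← Finset.sum_filter, Finset.sum_const, nsmul_eq_mul]
  rfl

lemma leafIn {k l : ℕ} (hk : 1 ≤ k) (hl : 1 ≤ l) {V : Type} [Fintype V] (A : V → V → Prop)
    (hopp : ∀ u v, A u v → ¬ A v u) (w : V) (z : Fin (k + l + 1)) (hz : z ∈ inLeaves k l) :
    (l : ℝ) * ((embF k l A).filter (fun φ => φ z = w)).card
      ≤ (nbP A w).card * (LamC k l * nonN A w ^ (k + l - 1)) := by
  rw [sum_center, Finset.mul_sum]
  refine (Finset.sum_le_sum (fun u _ => countIn hk hl A hopp u w z hz)).trans (le_of_eq ?_)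
  rw [← Finset.sum_filter, Finset.sum_const, nsmul_eq_mul]
  rfl

/-- stars centred at `x` with a leaf in a set `X` of vertices having few non-neighbours -/
lemma centerX {k l : ℕ} (hk : 1 ≤ k) (hl : 1 ≤ l) {V : Type} [Fintype V] (A : V → V → Prop)
    (hopp : ∀ u v, A u v → ¬ A v u) (x : V) (X : Finset V) (K : ℝ)
    (hK0 : 0 ≤ K) (hK : ∀ w ∈ X, LamC k l * nonN A w ^ (k + l - 1) ≤ K) :
    (((embF k l A).filter (fun φ => φ 0 = x)).card : ℝ)
      ≤ ((nbP A x ∩ Xᶜ).card : ℝ) ^ k * ((nbM A x ∩ Xᶜ).card : ℝ) ^ l + Fintype.card V * K := by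
  have hsub : (embF k l A).filter (fun φ => φ 0 = x) ⊆
      (embF k l A).filter (fun φ => φ 0 = x ∧ ∀ a, a ≠ 0 → φ a ∈ Xᶜ) ∪
      ((outLeaves k l).biUnion (fun z => X.biUnion
          (fun w => (embF k l A).filter (fun φ => φ 0 = x ∧ φ z = w))) ∪
       (inLeaves k l).biUnion (fun z => X.biUnion
          (fun w => (embF k l A).filter (fun φ => φ 0 = x ∧ φ z = w)))) := by
    intro φ hφ
    rw [mem_filter] at hφ
    by_cases h : ∀ a, a ≠ 0 → φ a ∈ Xᶜ
    · exact mem_union_left _ (mem_filter.2 ⟨hφ.1, hφ.2, h⟩)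
    · push Not at h
      obtain ⟨a, ha, haX⟩ := h
      rw [mem_compl, not_not] at haX
      apply mem_union_right
      by_cases hak : a.val ≤ k
      · apply mem_union_left
        simp only [mem_biUnion]
        exact ⟨a, by simp [outLeaves, ha, hak], φ a, haX, mem_filter.2 ⟨hφ.1, hφ.2, rfl⟩⟩
      · apply mem_union_right
        simp only [mem_biUnion]
        exact ⟨a, by simp only [inLeaves, mem_filter, mem_univ, true_and]; exact ⟨ha, hak⟩,
          φ a, haX, mem_filter.2 ⟨hφ.1, hφ.2, rfl⟩⟩
  have h1 := (Finset.card_le_card hsub).trans ((Finset.card_union_le _ _).trans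
    (Nat.add_le_add (countA A x Xᶜ) ((Finset.card_union_le _ _).trans
      (Nat.add_le_add
        (Finset.card_biUnion_le.trans (Finset.sum_le_sum (fun z _ => Finset.card_biUnion_le)))
        (Finset.card_biUnion_le.trans (Finset.sum_le_sum (fun z _ => Finset.card_biUnion_le)))))))
  have h2 := (Nat.cast_le (α := ℝ)).2 h1
  push_cast at h2
  have hk' : (0 : ℝ) < k := by exact_mod_cast hk
  have hl' : (0 : ℝ) < l := by exact_mod_cast hl
  have hout : ∑ z ∈ outLeaves k l, ∑ w ∈ X,
      (((embF k l A).filter (fun φ => φ 0 = x ∧ φ z = w)).card : ℝ) ≤ (nbP A x).card * K := by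
    have hz : ∀ z ∈ outLeaves k l, ∑ w ∈ X,
      (((embF k l A).filter (fun φ => φ 0 = x ∧ φ z = w)).card : ℝ) ≤ (nbP A x).card * K / k := by
      intro z hz
      rw [le_div_iff₀ hk', mul_comm, Finset.mul_sum]
      calc _ ≤ ∑ w ∈ X, (if A x w then K else 0) := by
            refine Finset.sum_le_sum (fun w hw => (countOut hk hl A hopp x w z hz).trans ?_)
            split_ifs
            · exact hK w hw
            · exact le_rfl
        _ ≤ ∑ w, (if A x w then K else 0) := by
            refine Finset.sum_le_sum_of_subset_of_nonneg (subset_univ _) (fun i _ _ => ?_)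
            split_ifs <;> simp [hK0]
        _ = _ := by
            rw [← Finset.sum_filter, Finset.sum_const, nsmul_eq_mul]
            rfl
    refine (Finset.sum_le_sum hz).trans (le_of_eq ?_)
    rw [Finset.sum_const, card_outLeaves, nsmul_eq_mul]
    field_simp
  have hin : ∑ z ∈ inLeaves k l, ∑ w ∈ X,
      (((embF k l A).filter (fun φ => φ 0 = x ∧ φ z = w)).card : ℝ) ≤ (nbM A x).card * K := by
    have hz : ∀ z ∈ inLeaves k l, ∑ w ∈ X,
      (((embF k l A).filter (fun φ => φ 0 = x ∧ φ z = w)).card : ℝ) ≤ (nbM A x).card * K / l := by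
      intro z hz
      rw [le_div_iff₀ hl', mul_comm, Finset.mul_sum]
      calc _ ≤ ∑ w ∈ X, (if A w x then K else 0) := by
            refine Finset.sum_le_sum (fun w hw => (countIn hk hl A hopp x w z hz).trans ?_)
            split_ifs
            · exact hK w hw
            · exact le_rfl
        _ ≤ ∑ w, (if A w x then K else 0) := by
            refine Finset.sum_le_sum_of_subset_of_nonneg (subset_univ _) (fun i _ _ => ?_)
            split_ifs <;> simp [hK0]
        _ = _ := by
            rw [← Finset.sum_filter, Finset.sum_const, nsmul_eq_mul]
            rfl
    refine (Finset.sum_le_sum hz).trans (le_of_eq ?_)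
    rw [Finset.sum_const, card_inLeaves, nsmul_eq_mul]
    field_simp
  have hPM : ((nbP A x).card : ℝ) + (nbM A x).card ≤ Fintype.card V := by
    have := card_PM' A hopp x
    have h3 := Finset.card_le_univ (nbA A x)
    rw [← this] at h3
    exact_mod_cast h3
  nlinarith

lemma sCond_eq (k l : ℕ) {V : Type} [Fintype V] (A : V → V → Prop) (z : Fin (k + l + 1)) (v : V) :
    sCond k l A z v = (((embF k l A).filter (fun φ => φ z = v)).card : ℝ) /
      (Fintype.card V : ℝ) ^ (k + l) := by
  unfold sCond embF
  rw [Nat.card_eq_fintype_card, Fintype.card_subtype, Finset.filter_filter]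

lemma rho_eq {V : Type} [Fintype V] (A : V → V → Prop) (v : V) :
    rho A v = ((nbA A v).card : ℝ) / (Fintype.card V : ℝ) := by
  unfold rho nbA
  rw [Nat.card_eq_fintype_card, Fintype.card_subtype]

lemma alphaX_eq {V : Type} [Fintype V] (A : V → V → Prop) :
    alphaX A = ((univ.filter (fun v => v ∈ bigX A)).card : ℝ) / (Fintype.card V : ℝ) := by
  unfold alphaX muSet
  rw [Nat.card_eq_fintype_card, ← Fintype.card_subtype]

end Comb

lemma OPT_lower (k l : ℕ) (hl : 1 ≤ l) (hlk : l ≤ k) :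
    (k : ℝ) ^ k * (l : ℝ) ^ l / ((k : ℝ) + l + 1) ^ (k + l + 1) ≤ OPT k l := by
  have hl' : (1 : ℝ) ≤ l := by exact_mod_cast hl
  have hk' : (1 : ℝ) ≤ k := by exact_mod_cast hl.trans hlk
  unfold OPT
  split_ifs with h
  · subst h
    have hb : BddAbove {y : ℝ | ∃ a ∈ Set.Icc (0 : ℝ) 1,
        y = a * (1 - a) ^ (2 * k) + (1 - a) * a ^ (2 * k)} := by
      refine ⟨2, ?_⟩
      rintro y ⟨a, ⟨h0, h1⟩, rfl⟩
      have e1 : (1 - a) ^ (2 * k) ≤ 1 := pow_le_one₀ (by linarith) (by linarith)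
      have e2 : a ^ (2 * k) ≤ 1 := pow_le_one₀ (by linarith) (by linarith)
      nlinarith
    have h1 := le_csSup hb ⟨1 / ((k : ℝ) + k + 1), ⟨by positivity, by
      rw [div_le_one (by positivity)]; linarith⟩, rfl⟩
    refine le_trans ?_ (mul_le_mul_of_nonneg_left h1 (by positivity))
    have h2 : 0 ≤ (1 - 1 / ((k : ℝ) + k + 1)) * (1 / ((k : ℝ) + k + 1)) ^ (2 * k) := by
      apply mul_nonneg _ (by positivity)
      rw [sub_nonneg, div_le_one (by positivity)]; linarith
    have h3 : (k : ℝ) ^ k * (k : ℝ) ^ k / ((k : ℝ) + k + 1) ^ (k + k + 1)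
        = 1 / 2 ^ (2 * k) * (1 / ((k : ℝ) + k + 1) * (1 - 1 / ((k : ℝ) + k + 1)) ^ (2 * k)) := by
      have : 1 - 1 / ((k : ℝ) + k + 1) = 2 * k / ((k : ℝ) + k + 1) := by field_simp; ring
      rw [this, div_pow, mul_pow, ← two_mul k, pow_succ]
      field_simp
      ring
    rw [h3]
    gcongr
    linarith
  · have hb : BddAbove {y : ℝ | ∃ a ∈ Set.Icc (0 : ℝ) (1 / 2),
      ∃ d ∈ Set.Icc (0 : ℝ) ((k : ℝ) / ((k : ℝ) + (l : ℝ))),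
      y = a * (1 - a) ^ (k + l) * d ^ k * (1 - d) ^ l
        + (((k : ℝ) - 1) ^ (k - 1) * (l : ℝ) ^ l / ((k : ℝ) + (l : ℝ) - 1) ^ (k + l - 1))
          * (1 - a) * a ^ (k + l) * (1 - d)} := by
      have : {y : ℝ | ∃ a ∈ Set.Icc (0 : ℝ) (1 / 2),
        ∃ d ∈ Set.Icc (0 : ℝ) ((k : ℝ) / ((k : ℝ) + (l : ℝ))),
        y = a * (1 - a) ^ (k + l) * d ^ k * (1 - d) ^ l
        + (((k : ℝ) - 1) ^ (k - 1) * (l : ℝ) ^ l / ((k : ℝ) + (l : ℝ) - 1) ^ (k + l - 1))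
          * (1 - a) * a ^ (k + l) * (1 - d)} = (fun p : ℝ × ℝ => 
          p.1 * (1 - p.1) ^ (k + l) * p.2 ^ k * (1 - p.2) ^ l
        + (((k : ℝ) - 1) ^ (k - 1) * (l : ℝ) ^ l / ((k : ℝ) + (l : ℝ) - 1) ^ (k + l - 1))
          * (1 - p.1) * p.1 ^ (k + l) * (1 - p.2)) ''
          (Set.Icc (0 : ℝ) (1 / 2) ×ˢ Set.Icc (0 : ℝ) ((k : ℝ) / ((k : ℝ) + (l : ℝ)))) := by
        ext y
        simp only [Set.mem_ofPred_eq, Set.mem_image, Set.mem_prod, Prod.exists]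
        constructor
        · rintro ⟨a, ha, d, hd, rfl⟩
          exact ⟨a, d, ⟨ha, hd⟩, rfl⟩
        · rintro ⟨a, d, ⟨ha, hd⟩, rfl⟩
          exact ⟨a, ha, d, hd, rfl⟩
      rw [this]
      apply IsCompact.bddAbove
      exact (isCompact_Icc.prod isCompact_Icc).image (by fun_prop)
    refine le_trans ?_ (le_csSup hb ⟨1 / ((k : ℝ) + l + 1), ⟨by positivity, by
      rw [div_le_div_iff₀ (by positivity) (by positivity)]; linarith⟩,
      (k : ℝ) / ((k : ℝ) + l), ⟨by positivity, le_rfl⟩, rfl⟩)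
    have e1 : 1 - 1 / ((k : ℝ) + l + 1) = ((k : ℝ) + l) / ((k : ℝ) + l + 1) := by field_simp; ring
    have e2 : 1 - (k : ℝ) / ((k : ℝ) + l) = l / ((k : ℝ) + l) := by field_simp; ring
    rw [e1, e2]
    have h2 : 0 ≤ ((k : ℝ) - 1) ^ (k - 1) * (l : ℝ) ^ l / ((k : ℝ) + (l : ℝ) - 1) ^ (k + l - 1)
          * (((k : ℝ) + l) / ((k : ℝ) + l + 1)) * (1 / ((k : ℝ) + l + 1)) ^ (k + l)
          * (l / ((k : ℝ) + l)) := by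
      have a1 : 0 ≤ (k : ℝ) - 1 := by linarith
      have a2 : 0 ≤ (k : ℝ) + l - 1 := by linarith
      positivity
    have h3 : (k : ℝ) ^ k * (l : ℝ) ^ l / ((k : ℝ) + l + 1) ^ (k + l + 1) =
        1 / ((k : ℝ) + l + 1) * (((k : ℝ) + l) / ((k : ℝ) + l + 1)) ^ (k + l)
          * ((k : ℝ) / ((k : ℝ) + l)) ^ k * (l / ((k : ℝ) + l)) ^ l := by
      have e3 : ((k : ℝ) + l) ^ (k + l) = ((k : ℝ) + l) ^ k * ((k : ℝ) + l) ^ l := pow_add _ _ _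
      rw [div_pow, div_pow, div_pow, e3, pow_succ]
      field_simp
    rw [h3]
    linarith

open scoped Fin.NatCast in
open Classical Finset in
lemma leaves_bound {k l : ℕ} (hl : 1 ≤ l) (hk : 1 ≤ k) {V : Type} [Fintype V] (A : V → V → Prop)
    (hopp : ∀ u v, A u v → ¬ A v u) (hn : 1 ≤ Fintype.card V) (v : V) :
    l * sCond k l A ((k + 1 : ℕ) : Fin (k + l + 1)) v + k * sCond k l A 1 v
      ≤ LamC k l * (rho A v * (1 - rho A v) ^ (k + l - 1)) := by
  have hN : (0 : ℝ) < Fintype.card V := by exact_mod_cast hn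
  have hz1 : (1 : Fin (k + l + 1)) ∈ outLeaves k l := by
    have h1 : (1 : Fin (k + l + 1)).val = 1 := by
      rw [Fin.val_one', Nat.mod_eq_of_lt]; omega
    simp only [outLeaves, mem_filter, mem_univ, true_and]
    refine ⟨fun e => ?_, by omega⟩
    rw [e] at h1
    simp at h1
  have hz2 : ((k + 1 : ℕ) : Fin (k + l + 1)) ∈ inLeaves k l := by
    have h1 : ((k + 1 : ℕ) : Fin (k + l + 1)).val = k + 1 := by
      rw [Fin.val_natCast, Nat.mod_eq_of_lt]; omega
    simp only [inLeaves, mem_filter, mem_univ, true_and]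
    refine ⟨fun e => ?_, by omega⟩
    rw [e] at h1
    simp at h1
  have ho := leafOut hk hl A hopp v _ hz1
  have hi := leafIn hk hl A hopp v _ hz2
  have hPM : ((nbP A v).card : ℝ) + (nbM A v).card = (nbA A v).card := by
    exact_mod_cast card_PM' A hopp v
  have hr := rho_eq A v
  have hA : ((nbA A v).card : ℝ) = rho A v * Fintype.card V := by rw [hr]; field_simp
  have hnon : nonN A v = (1 - rho A v) * Fintype.card V := by unfold nonN; rw [hA]; ring
  rw [sCond_eq, sCond_eq, mul_div_assoc', mul_div_assoc', ← add_div, div_le_iff₀ (by positivity)]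
  refine (add_le_add hi ho).trans (le_of_eq ?_)
  rw [← add_mul, hPM, hnon, hA, mul_pow]
  obtain ⟨j, hj⟩ : ∃ j, k + l = j + 1 := ⟨k + l - 1, by omega⟩
  rw [hj, Nat.add_sub_cancel, pow_succ (Fintype.card V : ℝ)]
  ring

open Classical Finset in
lemma key_bound {k l : ℕ} (hl : 1 ≤ l) (hlk : l ≤ k) (hm : 6 ≤ k + l) {V : Type} [Fintype V]
    (A : V → V → Prop)
    (hopp : ∀ u v, A u v → ¬ A v u) (hn : 1 ≤ Fintype.card V)
    (v : V) (hv : OPT k l ≤ sVert k l A v) (C : ℝ)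
    (hC : sCond k l A 0 v ≤ (k : ℝ) ^ k * (l : ℝ) ^ l / ((k + l : ℕ) : ℝ) ^ (k + l) * C) :
    (((k + l : ℕ) : ℝ) / (((k + l : ℕ) : ℝ) + 1)) ^ (k + l) ≤
      C + ((k + l : ℕ) : ℝ) ^ (k + l) / (((k + l : ℕ) : ℝ) - 1) ^ (k + l - 1)
        * (rho A v * (1 - rho A v) ^ (k + l - 1)) := by
  have hk : 1 ≤ k := hl.trans hlk
  have h1 := leaves_bound hl hk A hopp hn v
  have h2 := (OPT_lower k l hl hlk).trans hv
  unfold sVert at h2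
  have hl' : (1 : ℝ) ≤ l := by exact_mod_cast hl
  have hk' : (1 : ℝ) ≤ k := by exact_mod_cast hk
  rw [le_div_iff₀ (by positivity)] at h2
  unfold LamC at h1
  have h3 : (k : ℝ) ^ k * (l : ℝ) ^ l / ((k : ℝ) + l + 1) ^ (k + l + 1) * ((k : ℝ) + l + 1)
      = (k : ℝ) ^ k * (l : ℝ) ^ l / ((k : ℝ) + l + 1) ^ (k + l) := by
    rw [pow_succ]; field_simp
  rw [h3] at h2
  push_cast at hC ⊢
  set R := rho A v * (1 - rho A v) ^ (k + l - 1)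
  have hm1 : (0 : ℝ) < (k : ℝ) + l - 1 := by linarith
  have h4 : (k : ℝ) ^ k * (l : ℝ) ^ l / ((k : ℝ) + l + 1) ^ (k + l) ≤
      (k : ℝ) ^ k * (l : ℝ) ^ l / ((k : ℝ) + l) ^ (k + l) * C +
      (k : ℝ) ^ k * (l : ℝ) ^ l / ((k : ℝ) + l - 1) ^ (k + l - 1) * R := by linarith
  have hq : (0 : ℝ) < ((k : ℝ) + l) ^ (k + l) / ((k : ℝ) ^ k * (l : ℝ) ^ l) := by positivity
  have h5 := mul_le_mul_of_nonneg_left h4 hq.le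
  refine le_trans (le_of_eq ?_) (h5.trans (le_of_eq ?_))
  · rw [div_pow]; field_simp
  · field_simp

open Classical Finset in
/-- Degrees in `X` are at least `18/25`. -/
lemma deg_large {k l : ℕ} (hl : 1 ≤ l) (hlk : l ≤ k) (hm : 6 ≤ k + l) {V : Type} [Fintype V]
    (A : V → V → Prop)
    (hopp : ∀ u v, A u v → ¬ A v u) (hn : 1 ≤ Fintype.card V)
    (v : V) (hv : OPT k l ≤ sVert k l A v) (hX : 1 / 2 ≤ rho A v) : 18 / 25 ≤ rho A v := by
  by_contra hlt
  push Not at hlt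
  have hk : 1 ≤ k := hl.trans hlk
  have hN : (0 : ℝ) < Fintype.card V := by exact_mod_cast hn
  refine absurd (key_bound hl hlk hm A hopp hn v hv (rho A v ^ (k + l)) ?_)
    (not_le.2 (aux_N1 (k + l) hm (rho A v) hX hlt.le))
  have h1 := centerX hk hl A hopp v ∅ 0 le_rfl (by simp)
  simp only [compl_empty, inter_univ, mul_zero, add_zero] at h1
  have hPM : ((nbP A v).card : ℝ) + (nbM A v).card ≤ (nbA A v).card := by
    exact_mod_cast (card_PM' A hopp v).le
  have h2 := h1.trans (aux_amgm' k l hk hl _ _ _ (Nat.cast_nonneg _) (Nat.cast_nonneg _) hPM)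
  rw [sCond_eq, rho_eq, div_pow, ← mul_div_assoc]
  push_cast
  gcongr

theorem stmt13 (k l : ℕ) (hl : 1 ≤ l) (hlk : l ≤ k) (hm : 6 ≤ k + l)
    (V : Type) [Fintype V] (A : V → V → Prop)
    (hirr : Irreflexive A) (hopp : ∀ u v, A u v → ¬ A v u) (hn : 1 ≤ Fintype.card V)
    (hvert : ∀ v : V, OPT k l ≤ sVert k l A v) :
    alphaX A ≤ 1 / ((k : ℝ) + l) := by
  classical
  by_contra hcon
  push Not at hcon
  have hk : 1 ≤ k := hl.trans hlk
  have hN : (0 : ℝ) < Fintype.card V := by exact_mod_cast hn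
  have hm6 : (6 : ℝ) ≤ (k : ℝ) + l := by exact_mod_cast hm
  have hdeg : ∀ w ∈ bigX A, 18 / 25 ≤ rho A w := fun w hw =>
    deg_large hl hlk hm A hopp hn w (hvert w) hw
  have hrho1 : ∀ w, rho A w ≤ 1 := by
    intro w
    rw [rho_eq, div_le_one hN]
    exact_mod_cast Finset.card_le_univ _
  have hal := alphaX_eq A
  set X : Finset V := Finset.univ.filter (fun v => v ∈ bigX A) with hXdef
  have hXne : X.Nonempty := by
    rw [Finset.nonempty_iff_ne_empty]
    intro h
    rw [h] at hal
    simp at hal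
    rw [hal] at hcon
    have : (0 : ℝ) ≤ 1 / ((k : ℝ) + l) := by positivity
    linarith
  obtain ⟨x, hx⟩ := hXne
  have hxX : x ∈ bigX A := (Finset.mem_filter.1 hx).2
  have hLam : 0 ≤ LamC k l := by
    unfold LamC
    have : 0 ≤ (k : ℝ) + l - 1 := by linarith
    positivity
  have hnon : ∀ w, nonN A w = (1 - rho A w) * Fintype.card V := by
    intro w
    unfold nonN
    rw [rho_eq]; field_simp
  have h1 := centerX hk hl A hopp x X (LamC k l * (7 / 25 * (Fintype.card V : ℝ)) ^ (k + l - 1))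
    (by positivity) (by
      intro w hw
      have hw' := hdeg w (Finset.mem_filter.1 hw).2
      have := hrho1 w
      rw [hnon]
      refine mul_le_mul_of_nonneg_left (pow_le_pow_left₀ ?_ ?_ _) hLam
      · exact mul_nonneg (by linarith) hN.le
      · gcongr; linarith)
  have hcomp : ((Xᶜ.card : ℕ) : ℝ) = (1 - alphaX A) * Fintype.card V := by
    rw [hal]
    have := Finset.card_compl_add_card X
    rw [← this]
    rw [← this] at hN
    push_cast at hN ⊢
    field_simp
    ring
  have hPM : (((nbP A x ∩ Xᶜ).card : ℕ) : ℝ) + ((nbM A x ∩ Xᶜ).card : ℕ) ≤ (Xᶜ.card : ℕ) := by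
    exact_mod_cast card_PM A hopp x Xᶜ
  have h2 := aux_amgm' k l hk hl _ _ _ (Nat.cast_nonneg _) (Nat.cast_nonneg _) hPM
  rw [hcomp, mul_pow] at h2
  have h1a : 0 ≤ 1 - alphaX A := by
    have : 0 ≤ (1 - alphaX A) * Fintype.card V := by rw [← hcomp]; positivity
    exact nonneg_of_mul_nonneg_left this hN
  have hal' : 1 - alphaX A ≤ 1 - 1 / ((k + l : ℕ) : ℝ) := by push_cast; linarith
  have hpow : (1 - alphaX A) ^ (k + l) ≤ (1 - 1 / ((k + l : ℕ) : ℝ)) ^ (k + l) :=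
    pow_le_pow_left₀ h1a hal' _
  have hkey := key_bound hl hlk hm A hopp hn x (hvert x)
    ((1 - alphaX A) ^ (k + l) +
      ((k + l : ℕ) : ℝ) ^ (k + l) / (((k + l : ℕ) : ℝ) - 1) ^ (k + l - 1) * (7 / 25) ^ (k + l - 1)) (by
      rw [sCond_eq, div_le_iff₀ (by positivity)]
      refine (h1.trans (add_le_add_left h2 _)).trans (le_of_eq ?_)
      unfold LamC
      have hm1 : (0 : ℝ) < (k : ℝ) + l - 1 := by linarith
      have e : (Fintype.card V : ℝ) ^ (k + l) = (Fintype.card V : ℝ) ^ (k + l - 1) * Fintype.card V := by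
        rw [← pow_succ]; congr 1; omega
      push_cast
      rw [e, mul_pow]
      field_simp)
  have hnum := aux_N2 (k + l) hm
  have hr : rho A x * (1 - rho A x) ^ (k + l - 1) ≤ (7 / 25) ^ (k + l - 1) := by
    have a1 := hdeg x hxX
    have a2 := hrho1 x
    have a3 : (1 - rho A x) ^ (k + l - 1) ≤ (7 / 25) ^ (k + l - 1) :=
      pow_le_pow_left₀ (by linarith) (by linarith) _
    have a4 : 0 ≤ (1 - rho A x) ^ (k + l - 1) := pow_nonneg (by linarith) _
    nlinarith
  have hc0 : 0 ≤ ((k + l : ℕ) : ℝ) ^ (k + l) / (((k + l : ℕ) : ℝ) - 1) ^ (k + l - 1) := by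
    have : 0 ≤ ((k + l : ℕ) : ℝ) - 1 := by push_cast; linarith
    positivity
  have hr2 := mul_le_mul_of_nonneg_left hr hc0
  linarith
end
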